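/- Let m ≥ 1 be an integer and let μ be a positive Borel measure on T_{Λ₃}. Then the following are equivalent: (1) there exists A > 0 such that ∫_{T_{Λ₃}} |□^m F|² dμ ≤ A ‖F‖²_{H²(T_{Λ₃})} for every F ∈ H²(T_{Λ₃}); (2) there exists C > 0 such that ∫_{T_{Λ₃}} |G|² dμ ≤ C ‖G‖²_{A²_{2m}(T_{Λ₃})} for every G ∈ A²_{2m}(T_{Λ₃}). -/

import Mathlib

open MeasureTheory Set
open scoped ENNReal NNReal

noncomputable section

/-- The Lorentz cone `Λ₃ = {y ∈ ℝ³ : y₁ + y₂ > 0, y₁² − y₂² − y₃² > 0}`. -/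
def Lambda3 : Set (Fin 3 → ℝ) :=
  {y | 0 < y 0 + y 1 ∧ 0 < (y 0) ^ 2 - (y 1) ^ 2 - (y 2) ^ 2}

/-- The tube domain `T_{Λ₃} = ℝ³ + iΛ₃ ⊂ ℂ³`. -/
def TLambda3 : Set (Fin 3 → ℂ) :=
  {z | (fun i => (z i).im) ∈ Lambda3}

/-- The determinant function of the Lorentz cone: `Δ(y) = y₁² − y₂² − y₃²`. -/
def DeltaL (y : Fin 3 → ℝ) : ℝ := (y 0) ^ 2 - (y 1) ^ 2 - (y 2) ^ 2

/-- Square of the Hardy space `H²(T_{Λ₃})` norm. -/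
def hardyNormSq (F : (Fin 3 → ℂ) → ℂ) : ℝ≥0∞ :=
  ⨆ y ∈ Lambda3,
    ∫⁻ x : Fin 3 → ℝ, (‖F (fun i => (x i : ℂ) + (y i : ℂ) * Complex.I)‖₊ : ℝ≥0∞) ^ 2

/-- Square of the weighted Bergman space `A²_ν(T_{Λ₃})` norm:
`‖G‖² = ∫_{Λ₃} ∫_{ℝ³} |G(x+iy)|² Δ(y)^{ν−3/2} dx dy`. -/
def bergNormSqTube (ν : ℝ) (G : (Fin 3 → ℂ) → ℂ) : ℝ≥0∞ :=
  ∫⁻ y in Lambda3,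
    (∫⁻ x : Fin 3 → ℝ, (‖G (fun i => (x i : ℂ) + (y i : ℂ) * Complex.I)‖₊ : ℝ≥0∞) ^ 2)
      * ENNReal.ofReal (DeltaL y ^ (ν - 3 / 2))

/-- Partial derivative in the `i`-th complex coordinate. -/
def pd (i : Fin 3) (F : (Fin 3 → ℂ) → ℂ) : (Fin 3 → ℂ) → ℂ :=
  fun z => fderiv ℂ F z (Pi.single i 1)

/-- The box operator `□ = −∂²/∂z₁² + ∂²/∂z₂² + ∂²/∂z₃²` associated to the Lorentz cone. -/
def Box (F : (Fin 3 → ℂ) → ℂ) : (Fin 3 → ℂ) → ℂ :=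
  fun z => - pd 0 (pd 0 F) z + pd 1 (pd 1 F) z + pd 2 (pd 2 F) z

/-!
A holomorphic function on the tube which decays rapidly along horizontal slices is the Laplace
transform of a density carried by the dual cone, by Fourier inversion and a contour shift.  On such
functions Plancherel computes both norms: the Hardy norm is the `L²` norm of the density, and the
`A²_ν` norm is, up to a constant, the `L²` norm with weight `Δ^(-ν)`, because the gamma integral of
the cone is homogeneous under the transitive group of automorphisms of the cone.  Since `□`
multiplies the density by `4π²Δ`, the operator `□ᵐ` is a constant multiple of an isometry from `H²`
to `A²_{2m}`, and dividing the density by `(4π²Δ)ᵐ` inverts it.  General functions are reached by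
translating into the tube and dividing by a polynomial: this does not increase either norm, the
approximants and all their derivatives converge locally uniformly, and Fatou's lemma passes to the
limit.
-/

namespace BoxCarleson

open Filter Topology

section HolomorphicLimits

variable {E G : Type*} [NormedAddCommGroup E] [NormedSpace ℂ E]
  [NormedAddCommGroup G] [NormedSpace ℂ G]

lemma norm_fderiv_le_of_norm_le {f : E → G} {z : E} {r b : ℝ} (hr : 0 < r)
    (hf : DifferentiableOn ℂ f (Metric.ball z r)) (hb : ∀ w ∈ Metric.ball z r, ‖f w‖ ≤ b) :
    ‖fderiv ℂ f z‖ ≤ 2 * b / r := by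
  refine Complex.norm_fderiv_le_div_of_mapsTo_ball hf (fun w hw => ?_) hr
  rw [mem_closedBall_iff_norm]
  linarith [norm_sub_le (f w) (f z), hb w hw, hb z (Metric.mem_ball_self hr)]

lemma norm_fderiv_le_of_ball_subset {f : E → G} {z₀ z : E} {r b : ℝ}
    (hf : DifferentiableOn ℂ f (Metric.ball z₀ r)) (hb : ∀ w ∈ Metric.ball z₀ r, ‖f w‖ ≤ b)
    (hz : z ∈ Metric.ball z₀ (r / 2)) : ‖fderiv ℂ f z‖ ≤ 4 * b / r := by
  have hr : 0 < r / 2 := dist_nonneg.trans_lt hz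
  have hsub : Metric.ball z (r / 2) ⊆ Metric.ball z₀ r :=
    Metric.ball_subset_ball' (by linarith [Metric.mem_ball.1 hz])
  refine (norm_fderiv_le_of_norm_le hr (hf.mono hsub) fun w hw => hb w (hsub hw)).trans_eq ?_
  field_simp
  ring

lemma norm_fderiv_sub_le {f : E → G} {z₀ z h : E} {r b : ℝ}
    (hf : DifferentiableOn ℂ f (Metric.ball z₀ r)) (hb : ∀ w ∈ Metric.ball z₀ r, ‖f w‖ ≤ b)
    (hz : z ∈ Metric.ball z₀ (r / 8)) (hh : ‖h‖ < r / 4) :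
    ‖fderiv ℂ f (z + h) - fderiv ℂ f z‖ ≤ 64 * b / r ^ 2 * ‖h‖ := by
  have hr : 0 < r / 8 := dist_nonneg.trans_lt hz
  have hmem : ∀ w ∈ Metric.ball z₀ (r / 4), w + h ∈ Metric.ball z₀ (r / 2) := fun w hw => by
    rw [mem_ball_iff_norm] at hw ⊢
    have := norm_add_le (w - z₀) h
    rw [sub_add_eq_add_sub] at this
    linarith
  have hball : Metric.ball z₀ (r / 2) ⊆ Metric.ball z₀ r := Metric.ball_subset_ball (by linarith)
  have hquarter : Metric.ball z₀ (r / 4) ⊆ Metric.ball z₀ (r / 2) :=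
    Metric.ball_subset_ball (by linarith)
  have hdiff : ∀ w ∈ Metric.ball z₀ (r / 2), DifferentiableAt ℂ f w := fun w hw =>
    hf.differentiableAt (Metric.isOpen_ball.mem_nhds (hball hw))
  have hshift : ∀ w ∈ Metric.ball z₀ (r / 4), DifferentiableAt ℂ (fun w => f (w + h)) w :=
    fun w hw => (hdiff _ (hmem w hw)).comp w (by fun_prop)
  have hz' : z ∈ Metric.ball z₀ (r / 4) := Metric.ball_subset_ball (by linarith) hz
  have hfd : fderiv ℂ (fun w => f (w + h) - f w) z = fderiv ℂ f (z + h) - fderiv ℂ f z := by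
    rw [fderiv_fun_sub (hshift z hz') (hdiff z (hquarter hz')), fderiv_comp_add_right]
  rw [← hfd]
  refine (norm_fderiv_le_of_ball_subset (z₀ := z₀) (r := r / 4) (b := 4 * b / r * ‖h‖)
    (fun w hw => ((hshift w hw).sub (hdiff w (hquarter hw))).differentiableWithinAt)
    (fun w hw => ?_) (by convert hz using 2; ring)).trans_eq (by field_simp; ring)
  simpa using (convex_ball z₀ (r / 2)).norm_image_sub_le_of_norm_fderiv_le (𝕜 := ℂ) hdiff
    (fun v hv => norm_fderiv_le_of_ball_subset hf hb hv) (hquarter hw) (hmem w hw)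

lemma norm_sub_sub_fderiv_le {f : E → G} {z₀ z h : E} {r b : ℝ}
    (hf : DifferentiableOn ℂ f (Metric.ball z₀ r)) (hb : ∀ w ∈ Metric.ball z₀ r, ‖f w‖ ≤ b)
    (hz : z ∈ Metric.ball z₀ (r / 8)) (hh : ‖h‖ < r / 4) :
    ‖f (z + h) - f z - fderiv ℂ f z h‖ ≤ 64 * b / r ^ 2 * ‖h‖ ^ 2 := by
  have hr : 0 < r / 8 := dist_nonneg.trans_lt hz
  have hb0 : 0 ≤ b := (norm_nonneg _).trans (hb z (Metric.ball_subset_ball (by linarith) hz))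
  have hball : ∀ w ∈ Metric.closedBall z ‖h‖, ‖w - z‖ ≤ ‖h‖ ∧ w ∈ Metric.ball z₀ r := fun w hw =>
    ⟨mem_closedBall_iff_norm.1 hw, by
      rw [Metric.mem_closedBall] at hw
      rw [Metric.mem_ball] at hz ⊢
      linarith [dist_triangle w z z₀]⟩
  have key := (convex_closedBall z ‖h‖).norm_image_sub_le_of_norm_fderiv_le' (𝕜 := ℂ) (f := f)
    (φ := fderiv ℂ f z) (C := 64 * b / r ^ 2 * ‖h‖) (x := z) (y := z + h)
    (fun w hw => hf.differentiableAt (Metric.isOpen_ball.mem_nhds (hball w hw).2))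
    (fun w hw => by
      have := norm_fderiv_sub_le hf hb hz ((hball w hw).1.trans_lt hh)
      rw [add_sub_cancel] at this
      exact this.trans (by gcongr; exact (hball w hw).1))
    (Metric.mem_closedBall_self (norm_nonneg h)) (by simp)
  rw [add_sub_cancel_left] at key
  exact key.trans_eq (by ring)

lemma tendstoUniformlyOn_differenceQuotient {f : E → G} {z₀ : E} {r b : ℝ} (hr : 0 < r)
    (hf : DifferentiableOn ℂ f (Metric.ball z₀ r)) (hb : ∀ w ∈ Metric.ball z₀ r, ‖f w‖ ≤ b)
    (v : E) :
    TendstoUniformlyOn (fun (t : ℂ) z => t⁻¹ • (f (z + t • v) - f z)) (fun z => fderiv ℂ f z v)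
      (𝓝[≠] 0) (Metric.ball z₀ (r / 8)) := by
  rw [Metric.tendstoUniformlyOn_iff]
  intro ε hε
  have hlim : Tendsto (fun t : ℂ => 64 * b / r ^ 2 * (‖t‖ * ‖v‖ ^ 2)) (𝓝[≠] 0) (𝓝 0) :=
    (Continuous.tendsto' (by fun_prop) _ _ (by simp)).mono_left nhdsWithin_le_nhds
  have hsmall : Tendsto (fun t : ℂ => ‖t • v‖) (𝓝[≠] 0) (𝓝 0) :=
    (Continuous.tendsto' (by fun_prop) _ _ (by simp)).mono_left nhdsWithin_le_nhds
  filter_upwards [hlim.eventually_lt_const hε,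
    hsmall.eventually_lt_const (show 0 < r / 4 by positivity), self_mem_nhdsWithin]
    with t htε htr (ht0 : t ≠ 0) z hz
  have heq : t⁻¹ • (f (z + t • v) - f z) - fderiv ℂ f z v =
      t⁻¹ • (f (z + t • v) - f z - fderiv ℂ f z (t • v)) := by
    rw [smul_sub _ _ (fderiv ℂ f z _), map_smul, inv_smul_smul₀ ht0]
  refine lt_of_le_of_lt ?_ htε
  rw [dist_comm, dist_eq_norm, heq, norm_smul, norm_inv, inv_mul_le_iff₀ (norm_pos_iff.2 ht0)]
  refine (norm_sub_sub_fderiv_le hf hb hz htr).trans_eq ?_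
  rw [norm_smul]
  ring

lemma uniformCauchySeqOn_fderiv {ι : Type*} {φ : Filter ι} {F : ι → E → G} {z₀ : E} {r : ℝ}
    (hF : ∀ᶠ n in φ, DifferentiableOn ℂ (F n) (Metric.ball z₀ r))
    (h : UniformCauchySeqOn F φ (Metric.ball z₀ r)) :
    UniformCauchySeqOn (fun n => fderiv ℂ (F n)) φ (Metric.ball z₀ (r / 2)) := by
  rcases le_or_gt r 0 with hr | hr
  · simp [Metric.ball_eq_empty.2 (show r / 2 ≤ 0 by linarith), UniformCauchySeqOn]
  intro u hu
  obtain ⟨ε, hε, hεu⟩ := Metric.mem_uniformity_dist.1 hu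
  filter_upwards [h _ (Metric.dist_mem_uniformity (show 0 < ε * r / 8 by positivity)),
    hF.prod_mk hF] with n hn hFn z hz
  have hzr : Metric.ball z₀ r ∈ 𝓝 z :=
    Metric.isOpen_ball.mem_nhds (Metric.ball_subset_ball (by linarith) hz)
  refine hεu ?_
  rw [dist_eq_norm, ← fderiv_fun_sub (hFn.1.differentiableAt hzr) (hFn.2.differentiableAt hzr)]
  calc _ ≤ 4 * (ε * r / 8) / r := norm_fderiv_le_of_ball_subset (hFn.1.sub hFn.2)
        (fun w hw => by simpa [dist_eq_norm] using (hn w hw).le) hz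
    _ < ε := by field_simp; norm_num

variable [CompleteSpace G]

lemma differentiableOn_and_tendstoUniformlyOn_fderiv {ι : Type*} {φ : Filter ι} [φ.NeBot]
    {F : ι → E → G} {f : E → G} {z₀ : E} {r : ℝ}
    (hF : ∀ᶠ n in φ, DifferentiableOn ℂ (F n) (Metric.ball z₀ r))
    (h : TendstoUniformlyOn F f φ (Metric.ball z₀ r)) :
    DifferentiableOn ℂ f (Metric.ball z₀ (r / 2)) ∧
      TendstoUniformlyOn (fun n => fderiv ℂ (F n)) (fderiv ℂ f) φ (Metric.ball z₀ (r / 2)) := by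
  have hC := uniformCauchySeqOn_fderiv hF h.uniformCauchySeqOn
  have hsub : Metric.ball z₀ (r / 2) ⊆ Metric.ball z₀ r := fun w hw =>
    Metric.ball_subset_ball (by linarith [dist_nonneg.trans_lt hw]) hw
  have hlim : ∀ z ∈ Metric.ball z₀ (r / 2), ∃ L, Tendsto (fun n => fderiv ℂ (F n) z) φ (𝓝 L) :=
    fun z hz => cauchy_map_iff_exists_tendsto.1 (hC.cauchy_map hz)
  choose! f' hf' using hlim
  have hunif := hC.tendstoUniformlyOn_of_tendsto hf'
  have hderiv : ∀ z ∈ Metric.ball z₀ (r / 2), HasFDerivAt f (f' z) z := fun z hz =>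
    hasFDerivAt_of_tendstoUniformlyOnFilter (hunif.tendstoUniformlyOnFilter.mono_right
        (le_principal_iff.2 (Metric.isOpen_ball.mem_nhds hz)))
      ((hF.prod_mk (Metric.isOpen_ball.mem_nhds (hsub hz))).mono fun p hp =>
        (hp.1.differentiableAt (Metric.isOpen_ball.mem_nhds hp.2)).hasFDerivAt)
      (eventually_of_mem (Metric.isOpen_ball.mem_nhds (hsub hz)) fun w hw => h.tendsto_at hw)
  exact ⟨fun z hz => (hderiv z hz).differentiableAt.differentiableWithinAt,
    hunif.congr_right fun z hz => (hderiv z hz).fderiv.symm⟩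

lemma tendstoLocallyUniformlyOn_fderiv [ProperSpace E] {ι : Type*} {φ : Filter ι} [φ.NeBot]
    {F : ι → E → G} {f : E → G} {U : Set E} (hU : IsOpen U)
    (hF : ∀ᶠ n in φ, DifferentiableOn ℂ (F n) U) (h : TendstoLocallyUniformlyOn F f φ U) :
    TendstoLocallyUniformlyOn (fun n => fderiv ℂ (F n)) (fderiv ℂ f) φ U := by
  refine tendstoLocallyUniformlyOn_of_forall_exists_nhds fun z hz => ?_
  obtain ⟨r, hr, hrU⟩ := Metric.nhds_basis_closedBall.mem_iff.1 (hU.mem_nhds hz)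
  have hball := Metric.ball_subset_closedBall.trans hrU
  refine ⟨_, nhdsWithin_le_nhds (Metric.ball_mem_nhds z (half_pos hr)),
    (differentiableOn_and_tendstoUniformlyOn_fderiv (hF.mono fun n hn => hn.mono hball) ?_).2⟩
  exact ((tendstoLocallyUniformlyOn_iff_forall_isCompact hU).1 h _ hrU
    (isCompact_closedBall z r)).mono Metric.ball_subset_closedBall

lemma differentiableOn_fderiv_apply {f : E → G} {U : Set E} (hU : IsOpen U)
    (hf : DifferentiableOn ℂ f U) (v : E) : DifferentiableOn ℂ (fun z => fderiv ℂ f z v) U := by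
  intro z₀ hz₀
  have hc := (hf.differentiableAt (hU.mem_nhds hz₀)).continuousAt.norm
  obtain ⟨r, hr, hball⟩ := Metric.eventually_nhds_iff_ball.1
    ((hU.eventually_mem hz₀).and (hc.eventually_lt_const (lt_add_one _)))
  have hfr : DifferentiableOn ℂ f (Metric.ball z₀ r) := hf.mono fun w hw => (hball w hw).1
  have hquot : ∀ᶠ t : ℂ in 𝓝[≠] 0, ∀ z ∈ Metric.ball z₀ (r / 8), z + t • v ∈ Metric.ball z₀ r := by
    have : Tendsto (fun t : ℂ => ‖t • v‖) (𝓝[≠] 0) (𝓝 0) :=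
      (Continuous.tendsto' (by fun_prop) _ _ (by simp)).mono_left nhdsWithin_le_nhds
    filter_upwards [this.eventually_lt_const (show 0 < r / 8 by positivity)] with t ht z hz
    rw [mem_ball_iff_norm] at hz ⊢
    have := norm_add_le (z - z₀) (t • v)
    rw [sub_add_eq_add_sub] at this
    linarith
  have hdiff : ∀ᶠ t : ℂ in 𝓝[≠] 0, DifferentiableOn ℂ (fun z => t⁻¹ • (f (z + t • v) - f z))
      (Metric.ball z₀ (r / 8)) := by
    filter_upwards [hquot] with t ht
    have hsub : Metric.ball z₀ (r / 8) ⊆ Metric.ball z₀ r := Metric.ball_subset_ball (by linarith)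
    exact ((hfr.comp (by fun_prop) ht).sub (hfr.mono hsub)).const_smul _
  have hlim := tendstoUniformlyOn_differenceQuotient hr hfr (fun w hw => (hball w hw).2.le) v
  exact ((differentiableOn_and_tendstoUniformlyOn_fderiv hdiff hlim).1.differentiableAt
    (Metric.ball_mem_nhds z₀ (by positivity))).differentiableWithinAt

end HolomorphicLimits

section BoxOperator

variable {U : Set (Fin 3 → ℂ)} {F G : (Fin 3 → ℂ) → ℂ}

lemma eqOn_pd (hU : IsOpen U) (h : EqOn F G U) (i : Fin 3) : EqOn (pd i F) (pd i G) U :=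
  fun z hz => by simp only [pd, (h.eventuallyEq_of_mem (hU.mem_nhds hz)).fderiv_eq]

lemma eqOn_box (hU : IsOpen U) (h : EqOn F G U) : EqOn (Box F) (Box G) U := fun z hz => by
  simp only [Box, eqOn_pd hU (eqOn_pd hU h _) _ hz]

lemma eqOn_box_iterate (hU : IsOpen U) (h : EqOn F G U) (m : ℕ) :
    EqOn (Box^[m] F) (Box^[m] G) U := by
  induction m with
  | zero => exact h
  | succ m ih => simpa only [Function.iterate_succ_apply'] using eqOn_box hU ih

lemma differentiableOn_box (hU : IsOpen U) (hF : DifferentiableOn ℂ F U) :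
    DifferentiableOn ℂ (Box F) U := by
  have hpd (i : Fin 3) : DifferentiableOn ℂ (pd i (pd i F)) U :=
    differentiableOn_fderiv_apply hU (differentiableOn_fderiv_apply hU hF _) _
  exact ((hpd 0).neg.add (hpd 1)).add (hpd 2)

lemma differentiableOn_box_iterate (hU : IsOpen U) (hF : DifferentiableOn ℂ F U) (m : ℕ) :
    DifferentiableOn ℂ (Box^[m] F) U := by
  induction m with
  | zero => exact hF
  | succ m ih => simpa only [Function.iterate_succ_apply'] using differentiableOn_box hU ih

variable {ι : Type*} {φ : Filter ι} [φ.NeBot] {Fn : ι → (Fin 3 → ℂ) → ℂ}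

lemma tendstoLocallyUniformlyOn_pd (hU : IsOpen U) (hFn : ∀ n, DifferentiableOn ℂ (Fn n) U)
    (h : TendstoLocallyUniformlyOn Fn F φ U) (i : Fin 3) :
    TendstoLocallyUniformlyOn (fun n => pd i (Fn n)) (pd i F) φ U :=
  (ContinuousLinearMap.apply ℂ ℂ (Pi.single i 1 : Fin 3 → ℂ)).uniformContinuous
    |>.comp_tendstoLocallyUniformlyOn
      (tendstoLocallyUniformlyOn_fderiv hU (Eventually.of_forall hFn) h)

lemma tendstoLocallyUniformlyOn_box (hU : IsOpen U) (hFn : ∀ n, DifferentiableOn ℂ (Fn n) U)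
    (h : TendstoLocallyUniformlyOn Fn F φ U) :
    TendstoLocallyUniformlyOn (fun n => Box (Fn n)) (Box F) φ U := by
  have hpd (i : Fin 3) := tendstoLocallyUniformlyOn_pd hU
    (fun n => differentiableOn_fderiv_apply hU (hFn n) _)
    (tendstoLocallyUniformlyOn_pd hU hFn h i) i
  exact ((hpd 0).neg.add (hpd 1)).add (hpd 2)

lemma tendstoLocallyUniformlyOn_box_iterate (hU : IsOpen U)
    (hFn : ∀ n, DifferentiableOn ℂ (Fn n) U) (h : TendstoLocallyUniformlyOn Fn F φ U) (m : ℕ) :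
    TendstoLocallyUniformlyOn (fun n => Box^[m] (Fn n)) (Box^[m] F) φ U := by
  induction m with
  | zero => exact h
  | succ m ih =>
    simpa only [Function.iterate_succ_apply'] using
      tendstoLocallyUniformlyOn_box hU (fun n => differentiableOn_box_iterate hU (hFn n) m) ih

end BoxOperator

section Tubes

variable {ι : Type*}

/-- The point `x + iy` of `ℂ^ι`. -/
def tubePoint (x y : ι → ℝ) : ι → ℂ := fun i => (x i : ℂ) + (y i : ℂ) * Complex.I

/-- The imaginary part of a complex vector. -/
def imPart (z : ι → ℂ) : ι → ℝ := fun i => (z i).im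

/-- The real part of a complex vector. -/
def rePart (z : ι → ℂ) : ι → ℝ := fun i => (z i).re

/-- The tube domain `ℝ^ι + iΩ`. -/
def tube (Ω : Set (ι → ℝ)) : Set (ι → ℂ) := imPart ⁻¹' Ω

@[simp] lemma imPart_tubePoint (x y : ι → ℝ) : imPart (tubePoint x y) = y := by
  ext i; simp [imPart, tubePoint]

@[simp] lemma rePart_tubePoint (x y : ι → ℝ) : rePart (tubePoint x y) = x := by
  ext i; simp [rePart, tubePoint]

lemma tubePoint_rePart_imPart (z : ι → ℂ) : tubePoint (rePart z) (imPart z) = z := by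
  ext i; simp [rePart, imPart, tubePoint, Complex.re_add_im]

@[fun_prop] lemma continuous_imPart : Continuous (imPart : (ι → ℂ) → ι → ℝ) := by
  unfold imPart; fun_prop

lemma continuous_tubePoint : Continuous fun p : (ι → ℝ) × (ι → ℝ) => tubePoint p.1 p.2 := by
  unfold tubePoint; fun_prop

lemma mem_tube {Ω : Set (ι → ℝ)} {z : ι → ℂ} : z ∈ tube Ω ↔ imPart z ∈ Ω := Iff.rfl

lemma tubePoint_mem_tube {Ω : Set (ι → ℝ)} {x y : ι → ℝ} : tubePoint x y ∈ tube Ω ↔ y ∈ Ω := by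
  rw [mem_tube, imPart_tubePoint]

lemma tubePoint_add (x y v : ι → ℝ) : tubePoint x (y + v) = tubePoint x y + tubePoint 0 v := by
  ext i; simp [tubePoint]; ring

lemma imPart_add_tubePoint_zero (z : ι → ℂ) (v : ι → ℝ) :
    imPart (z + tubePoint 0 v) = imPart z + v := by
  ext i; simp [imPart, tubePoint]

lemma isOpen_tube {Ω : Set (ι → ℝ)} (hΩ : IsOpen Ω) : IsOpen (tube Ω) :=
  hΩ.preimage continuous_imPart

lemma continuous_slice {Ω : Set (ι → ℝ)} {F : (ι → ℂ) → ℂ} (hF : ContinuousOn F (tube Ω))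
    {y : ι → ℝ} (hy : y ∈ Ω) : Continuous fun x => F (tubePoint x y) :=
  hF.comp_continuous (continuous_tubePoint.comp (continuous_id.prodMk continuous_const))
    fun _ => tubePoint_mem_tube.2 hy

variable [Fintype ι]

/-- The complex bilinear extension `z · ξ = ∑ zᵢ ξᵢ` of the dot product. -/
def pairing (z : ι → ℂ) (ξ : ι → ℝ) : ℂ := ∑ i, z i * ξ i

lemma pairing_tubePoint (x y ξ : ι → ℝ) :
    pairing (tubePoint x y) ξ = (x ⬝ᵥ ξ : ℝ) + (y ⬝ᵥ ξ : ℝ) * Complex.I := by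
  simp only [pairing, tubePoint, dotProduct, Complex.ofReal_sum, Complex.ofReal_mul,
    Finset.sum_mul, ← Finset.sum_add_distrib]
  exact Finset.sum_congr rfl fun i _ => by ring

@[simp] lemma re_pairing (z : ι → ℂ) (ξ : ι → ℝ) : (pairing z ξ).re = rePart z ⬝ᵥ ξ := by
  simp [pairing, dotProduct, rePart]

@[simp] lemma im_pairing (z : ι → ℂ) (ξ : ι → ℝ) : (pairing z ξ).im = imPart z ⬝ᵥ ξ := by
  simp [pairing, dotProduct, imPart]

lemma norm_pairing_le (z : ι → ℂ) (ξ : ι → ℝ) : ‖pairing z ξ‖ ≤ Fintype.card ι * (‖z‖ * ‖ξ‖) := by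
  refine (norm_sum_le_of_le _ fun i _ => ?_).trans_eq (by simp : ∑ _i : ι, ‖z‖ * ‖ξ‖ = _)
  rw [norm_mul, Complex.norm_real]
  exact mul_le_mul (norm_le_pi_norm z i) (norm_le_pi_norm ξ i) (norm_nonneg _) (norm_nonneg _)

/-- The integral of `|F|²` over the slice `ℝ^ι + iy`. -/
def sliceNormSq (F : (ι → ℂ) → ℂ) (y : ι → ℝ) : ℝ≥0∞ := ∫⁻ x, ‖F (tubePoint x y)‖ₑ ^ 2

/-- The dual cone of a set, with the dot product identifying `ℝ^ι` with its dual. -/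
def dualCone (Ω : Set (ι → ℝ)) : Set (ι → ℝ) := {ξ | ∀ y ∈ Ω, 0 ≤ y ⬝ᵥ ξ}

lemma isClosed_dualCone (Ω : Set (ι → ℝ)) : IsClosed (dualCone Ω) := by
  simp only [dualCone, ofPred_forall]
  exact isClosed_biInter fun y _ => isClosed_le (by fun_prop) (by unfold dotProduct; fun_prop)

lemma exists_mul_norm_le_dotProduct {Ω : Set (ι → ℝ)} (hΩ : IsOpen Ω) {y : ι → ℝ} (hy : y ∈ Ω) :
    ∃ δ > 0, ∀ ξ ∈ dualCone Ω, δ * ‖ξ‖ ≤ y ⬝ᵥ ξ := by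
  classical
  obtain ⟨δ, hδ, hball⟩ := Metric.nhds_basis_closedBall.mem_iff.1 (hΩ.mem_nhds hy)
  have key : ∀ ξ ∈ dualCone Ω, ∀ i t, |t| ≤ δ → 0 ≤ y ⬝ᵥ ξ + t * ξ i := fun ξ hξ i t ht => by
    have := hξ (y + Pi.single i t) (hball (by simpa [mem_closedBall_iff_norm, Pi.norm_single]))
    rwa [add_dotProduct, single_dotProduct] at this
  refine ⟨δ, hδ, fun ξ hξ => ?_⟩
  rw [← le_div_iff₀' hδ, pi_norm_le_iff_of_nonneg (div_nonneg (hξ y hy) hδ.le)]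
  refine fun i => (le_div_iff₀' hδ).2 ?_
  rw [Real.norm_eq_abs]
  rcases abs_cases (ξ i) with ⟨h, -⟩ | ⟨h, -⟩ <;> rw [h]
  · linarith [key ξ hξ i (-δ) (by rw [abs_neg, abs_of_pos hδ])]
  · linarith [key ξ hξ i δ (abs_of_pos hδ).le]

end Tubes

section ExpDecay

lemma pow_le_exp_mul {a t : ℝ} (ha : 0 < a) (ht : 0 ≤ t) (n : ℕ) :
    (1 + t) ^ n ≤ n.factorial * (Real.exp a / a ^ n) * Real.exp (a * t) := by
  have h := (div_le_iff₀' (by positivity)).1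
    (Real.pow_div_factorial_le_exp (a * (1 + t)) (by positivity) n)
  rw [mul_pow, mul_add, mul_one, Real.exp_add, ← le_div_iff₀' (by positivity)] at h
  exact h.trans_eq (by ring)

lemma integrable_exp_neg_mul_norm {E : Type*} [NormedAddCommGroup E] [NormedSpace ℝ E]
    [FiniteDimensional ℝ E] [MeasurableSpace E] [BorelSpace E] (μ : Measure E)
    [μ.IsAddHaarMeasure] {a : ℝ} (ha : 0 < a) :
    Integrable (fun x : E => Real.exp (-a * ‖x‖)) μ := by
  set n := Module.finrank ℝ E + 1
  have hint := (integrable_one_add_norm (E := E) (μ := μ) (r := n) (by simp [n])).const_mul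
    (n.factorial * (Real.exp a / a ^ n))
  refine hint.mono' (by fun_prop) (.of_forall fun x => ?_)
  rw [Real.norm_eq_abs, Real.abs_exp, Real.rpow_neg (by positivity), Real.rpow_natCast,
    ← div_eq_mul_inv, le_div_iff₀ (by positivity), neg_mul, Real.exp_neg,
    inv_mul_le_iff₀ (Real.exp_pos _), mul_comm]
  exact pow_le_exp_mul ha (norm_nonneg x) n

end ExpDecay

section LaplaceTransform

variable {ι : Type*} [Fintype ι]

/-- The weight `exp (-2π y · ξ)`, which is the modulus of `laplaceKernel (x + iy) ξ`. -/
def expWeight (y ξ : ι → ℝ) : ℝ := Real.exp (-2 * Real.pi * (y ⬝ᵥ ξ))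

/-- The kernel `exp (2πi z · ξ)` of the Fourier–Laplace transform. -/
def laplaceKernel (z : ι → ℂ) (ξ : ι → ℝ) : ℂ :=
  Complex.exp (2 * Real.pi * Complex.I * pairing z ξ)

/-- The Fourier–Laplace transform `z ↦ ∫ exp (2πi z · ξ) f ξ dξ`. -/
def laplace (f : (ι → ℝ) → ℂ) (z : ι → ℂ) : ℂ := ∫ ξ, laplaceKernel z ξ * f ξ

lemma expWeight_pos (y ξ : ι → ℝ) : 0 < expWeight y ξ := Real.exp_pos _

lemma expWeight_add (y w ξ : ι → ℝ) : expWeight (y + w) ξ = expWeight y ξ * expWeight w ξ := by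
  rw [expWeight, expWeight, expWeight, ← Real.exp_add, add_dotProduct]
  ring_nf

lemma expWeight_half_mul_self (y ξ : ι → ℝ) :
    expWeight ((1 / 2 : ℝ) • y) ξ * expWeight ((1 / 2 : ℝ) • y) ξ = expWeight y ξ := by
  rw [← expWeight_add, ← add_smul, add_halves, one_smul]

lemma expWeight_le_one {Ω : Set (ι → ℝ)} {y ξ : ι → ℝ} (hy : y ∈ Ω) (hξ : ξ ∈ dualCone Ω) :
    expWeight y ξ ≤ 1 :=
  Real.exp_le_one_iff.2 (by nlinarith [hξ y hy, Real.pi_pos])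

lemma norm_laplaceKernel (z : ι → ℂ) (ξ : ι → ℝ) :
    ‖laplaceKernel z ξ‖ = expWeight (imPart z) ξ := by
  rw [laplaceKernel, Complex.norm_exp, expWeight]
  congr 1
  simp

lemma continuous_expWeight (y : ι → ℝ) : Continuous (expWeight y) := by
  unfold expWeight dotProduct; fun_prop

lemma continuous_laplaceKernel (z : ι → ℂ) : Continuous (laplaceKernel z) := by
  unfold laplaceKernel pairing; fun_prop

lemma exists_pow_mul_expWeight_le {Ω : Set (ι → ℝ)} (hΩ : IsOpen Ω) {y : ι → ℝ} (hy : y ∈ Ω)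
    (n : ℕ) : ∃ C, ∀ ξ ∈ dualCone Ω, (1 + ‖ξ‖) ^ n * expWeight y ξ ≤ C := by
  obtain ⟨δ, hδ, hle⟩ := exists_mul_norm_le_dotProduct hΩ hy
  have ha : 0 < 2 * Real.pi * δ := by positivity
  refine ⟨n.factorial * (Real.exp (2 * Real.pi * δ) / (2 * Real.pi * δ) ^ n), fun ξ hξ => ?_⟩
  rw [expWeight, neg_mul, neg_mul, Real.exp_neg, ← div_eq_mul_inv, div_le_iff₀ (Real.exp_pos _)]
  refine (pow_le_exp_mul ha (norm_nonneg ξ) n).trans ?_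
  rw [mul_assoc (2 * Real.pi)]
  gcongr
  exact hle ξ hξ

lemma memLp_indicator_expWeight {Ω : Set (ι → ℝ)} (hΩ : IsOpen Ω) {y : ι → ℝ} (hy : y ∈ Ω) :
    MemLp ((dualCone Ω).indicator (expWeight y)) 2 volume := by
  obtain ⟨δ, hδ, hle⟩ := exists_mul_norm_le_dotProduct hΩ hy
  have hmeas : MeasurableSet (dualCone Ω) := (isClosed_dualCone Ω).measurableSet
  have hsq : Integrable ((dualCone Ω).indicator fun ξ => expWeight y ξ ^ 2) := by
    refine (integrable_exp_neg_mul_norm volume (show 0 < 4 * Real.pi * δ by positivity)).mono'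
      ((((continuous_expWeight y).pow 2).measurable.indicator hmeas).aestronglyMeasurable)
      (.of_forall fun ξ => ?_)
    by_cases hξ : ξ ∈ dualCone Ω
    · rw [indicator_of_mem hξ, norm_pow, expWeight, Real.norm_eq_abs, Real.abs_exp,
        ← Real.exp_nat_mul]
      refine Real.exp_le_exp.2 ?_
      push_cast
      nlinarith [hle ξ hξ, Real.pi_pos]
    · rw [indicator_of_notMem hξ, norm_zero]
      positivity
  refine (memLp_two_iff_integrable_sq
    ((continuous_expWeight y).measurable.indicator hmeas).aestronglyMeasurable).2 ?_
  simpa only [sq, indicator_mul] using hsq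

/-- The functions supported in the dual cone of `Ω` whose product with every weight `expWeight y`,
`y ∈ Ω`, is square-integrable. Their Laplace transforms are holomorphic on the tube over `Ω`. -/
structure LaplaceDensity (Ω : Set (ι → ℝ)) (f : (ι → ℝ) → ℂ) : Prop where
  eq_zero : ∀ ξ ∉ dualCone Ω, f ξ = 0
  memLp : ∀ y ∈ Ω, MemLp (fun ξ => expWeight y ξ • f ξ) 2 volume

namespace LaplaceDensity

lemma of_memLp {Ω : Set (ι → ℝ)} {f : (ι → ℝ) → ℂ} (h0 : ∀ ξ ∉ dualCone Ω, f ξ = 0)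
    (hf : MemLp f 2 volume) : LaplaceDensity Ω f := by
  refine ⟨h0, fun y hy => hf.mono
    ((continuous_expWeight y).aestronglyMeasurable.smul hf.aestronglyMeasurable)
    (.of_forall fun ξ => ?_)⟩
  rw [norm_smul, Real.norm_of_nonneg (expWeight_pos y ξ).le]
  by_cases hξ : ξ ∈ dualCone Ω
  · exact mul_le_of_le_one_left (norm_nonneg _) (expWeight_le_one hy hξ)
  · simp [h0 ξ hξ]

lemma of_norm_le {Ω : Set (ι → ℝ)} (hΩ : IsOpen Ω) {f : (ι → ℝ) → ℂ} {C : ℝ}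
    (h0 : ∀ ξ ∉ dualCone Ω, f ξ = 0) (hf : AEStronglyMeasurable f volume) (hC : ∀ ξ, ‖f ξ‖ ≤ C) :
    LaplaceDensity Ω f := by
  refine ⟨h0, fun y hy => ((memLp_indicator_expWeight hΩ hy).norm.const_mul C).mono
    ((continuous_expWeight y).aestronglyMeasurable.smul hf) (.of_forall fun ξ => ?_)⟩
  by_cases hξ : ξ ∈ dualCone Ω
  · simp only [norm_smul, norm_mul, norm_norm, indicator_of_mem hξ]
    rw [mul_comm]
    exact mul_le_mul_of_nonneg_right ((hC ξ).trans (le_abs_self C)) (norm_nonneg _)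
  · rw [h0 ξ hξ, smul_zero, norm_zero]
    exact norm_nonneg _

variable {Ω : ConvexCone ℝ (ι → ℝ)} {f : (ι → ℝ) → ℂ}

lemma aestronglyMeasurable (hf : LaplaceDensity Ω f) (hne : (Ω : Set (ι → ℝ)).Nonempty) :
    AEStronglyMeasurable f volume := by
  obtain ⟨y, hy⟩ := hne
  have hinv : Continuous fun ξ => (expWeight y ξ)⁻¹ :=
    (continuous_expWeight y).inv₀ fun ξ => (expWeight_pos y ξ).ne'
  refine (hinv.aestronglyMeasurable.smul (hf.memLp y hy).aestronglyMeasurable).congr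
    (.of_forall fun ξ => ?_)
  exact inv_smul_smul₀ (expWeight_pos y ξ).ne' _

lemma integrable_expWeight_smul (hΩ : IsOpen (Ω : Set (ι → ℝ))) (hf : LaplaceDensity Ω f)
    {y : ι → ℝ} (hy : y ∈ Ω) : Integrable (fun ξ => expWeight y ξ • f ξ) := by
  have hhalf : (1 / 2 : ℝ) • y ∈ Ω := Ω.smul_mem one_half_pos hy
  refine (memLp_one_iff_integrable.1
    ((hf.memLp _ hhalf).smul (memLp_indicator_expWeight hΩ hhalf))).congr (.of_forall fun ξ => ?_)
  by_cases hξ : ξ ∈ dualCone (Ω : Set (ι → ℝ))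
  · simp only [Pi.smul_apply', indicator_of_mem hξ, smul_smul, expWeight_half_mul_self]
  · simp [hf.eq_zero ξ hξ]

lemma integrable_laplaceKernel_mul (hΩ : IsOpen (Ω : Set (ι → ℝ))) (hf : LaplaceDensity Ω f)
    {z : ι → ℂ} (hz : z ∈ tube (Ω : Set (ι → ℝ))) :
    Integrable (fun ξ => laplaceKernel z ξ * f ξ) := by
  refine (hf.integrable_expWeight_smul hΩ hz).mono
    ((continuous_laplaceKernel z).aestronglyMeasurable.mul (hf.aestronglyMeasurable ⟨_, hz⟩))
    (.of_forall fun ξ => ?_)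
  rw [norm_mul, norm_laplaceKernel, norm_smul, Real.norm_of_nonneg (expWeight_pos _ _).le]

lemma mul_of_norm_le_pow (hΩ : IsOpen (Ω : Set (ι → ℝ))) (hf : LaplaceDensity Ω f)
    {q : (ι → ℝ) → ℂ} (hq : Continuous q) {C : ℝ} {n : ℕ} (hC : ∀ ξ, ‖q ξ‖ ≤ C * (1 + ‖ξ‖) ^ n) :
    LaplaceDensity Ω (fun ξ => q ξ * f ξ) := by
  refine ⟨fun ξ hξ => by rw [hf.eq_zero ξ hξ, mul_zero], fun y hy => ?_⟩
  have hhalf : (1 / 2 : ℝ) • y ∈ Ω := Ω.smul_mem one_half_pos hy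
  obtain ⟨B, hB⟩ := exists_pow_mul_expWeight_le hΩ hhalf n
  have hC0 : 0 ≤ C := by simpa using (norm_nonneg _).trans (hC 0)
  refine ((hf.memLp _ hhalf).norm.const_mul (C * B)).mono
    ((continuous_expWeight y).aestronglyMeasurable.smul
      (hq.aestronglyMeasurable.mul (hf.aestronglyMeasurable ⟨y, hy⟩))) (.of_forall fun ξ => ?_)
  by_cases hξ : ξ ∈ dualCone (Ω : Set (ι → ℝ))
  · set w := expWeight ((1 / 2 : ℝ) • y) ξ with hw
    have hw0 : 0 < w := expWeight_pos _ _
    calc ‖expWeight y ξ • (q ξ * f ξ)‖ = ‖q ξ‖ * w * (w * ‖f ξ‖) := by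
          rw [← expWeight_half_mul_self, ← hw, norm_smul, norm_mul (q ξ),
            Real.norm_of_nonneg (by positivity)]
          ring
      _ ≤ C * B * (w * ‖f ξ‖) := by
          refine mul_le_mul_of_nonneg_right ?_ (by positivity)
          calc ‖q ξ‖ * w ≤ C * (1 + ‖ξ‖) ^ n * w := by gcongr; exact hC ξ
            _ ≤ C * B := by rw [mul_assoc]; gcongr; exact hB ξ hξ
      _ ≤ ‖C * B * ‖w • f ξ‖‖ := by
          rw [norm_smul, Real.norm_of_nonneg hw0.le]
          exact Real.le_norm_self _
  · simp [hf.eq_zero ξ hξ]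

end LaplaceDensity

end LaplaceTransform

section LaplaceDerivative

variable {ι : Type*} [Fintype ι]

/-- The linear form `z ↦ pairing z ξ`. -/
def pairingCLM (ξ : ι → ℝ) : (ι → ℂ) →L[ℂ] ℂ :=
  ∑ i, (ξ i : ℂ) • ContinuousLinearMap.proj i

lemma pairingCLM_apply (ξ : ι → ℝ) (z : ι → ℂ) : pairingCLM ξ z = pairing z ξ := by
  simp [pairingCLM, pairing, mul_comm]

lemma norm_pairingCLM_le (ξ : ι → ℝ) : ‖pairingCLM ξ‖ ≤ Fintype.card ι * ‖ξ‖ :=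
  ContinuousLinearMap.opNorm_le_bound _ (by positivity) fun z => by
    rw [pairingCLM_apply]
    exact (norm_pairing_le z ξ).trans_eq (by ring)

lemma continuous_pairingCLM : Continuous (pairingCLM : (ι → ℝ) → (ι → ℂ) →L[ℂ] ℂ) := by
  unfold pairingCLM; fun_prop

/-- The derivative of the kernel `laplaceKernel z ξ` in `z`. -/
def laplaceKernelDeriv (z : ι → ℂ) (ξ : ι → ℝ) : (ι → ℂ) →L[ℂ] ℂ :=
  (2 * Real.pi * Complex.I * laplaceKernel z ξ) • pairingCLM ξ

lemma laplaceKernelDeriv_apply (z : ι → ℂ) (ξ : ι → ℝ) (v : ι → ℂ) :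
    laplaceKernelDeriv z ξ v = 2 * Real.pi * Complex.I * laplaceKernel z ξ * pairing v ξ := by
  rw [laplaceKernelDeriv, ← pairingCLM_apply]
  rfl

lemma continuous_laplaceKernelDeriv (z : ι → ℂ) : Continuous (laplaceKernelDeriv z) :=
  (continuous_const.mul (continuous_laplaceKernel z)).smul continuous_pairingCLM

lemma hasFDerivAt_laplaceKernel (z : ι → ℂ) (ξ : ι → ℝ) :
    HasFDerivAt (fun z => laplaceKernel z ξ) (laplaceKernelDeriv z ξ) z := by
  have h : HasFDerivAt (fun z => pairing z ξ) (pairingCLM ξ) z :=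
    (pairingCLM ξ).hasFDerivAt.congr_of_eventuallyEq
      (.of_forall fun w => (pairingCLM_apply ξ w).symm)
  refine (h.const_mul (2 * Real.pi * Complex.I : ℂ)).cexp.congr_fderiv ?_
  rw [smul_smul, mul_comm]
  rfl

lemma norm_laplaceKernelDeriv_le (z : ι → ℂ) (ξ : ι → ℝ) :
    ‖laplaceKernelDeriv z ξ‖ ≤
      ‖laplaceKernel z ξ‖ * (2 * Real.pi * (Fintype.card ι * ‖ξ‖)) := by
  rw [laplaceKernelDeriv, norm_smul]
  simp only [norm_mul, Complex.norm_I, Complex.norm_real, Complex.norm_two, mul_one,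
    Real.norm_of_nonneg Real.pi_pos.le]
  rw [mul_comm (2 * Real.pi), mul_assoc]
  gcongr
  exact norm_pairingCLM_le ξ

namespace LaplaceDensity

variable {Ω : ConvexCone ℝ (ι → ℝ)} {f : (ι → ℝ) → ℂ}

lemma pairing_mul (hΩ : IsOpen (Ω : Set (ι → ℝ))) (hf : LaplaceDensity Ω f) (v : ι → ℂ) :
    LaplaceDensity Ω (fun ξ => 2 * Real.pi * Complex.I * pairing v ξ * f ξ) := by
  refine hf.mul_of_norm_le_pow (C := 2 * Real.pi * (Fintype.card ι * ‖v‖)) (n := 1) hΩ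
    (by unfold pairing; fun_prop) fun ξ => ?_
  simp only [norm_mul, Complex.norm_I, Complex.norm_real, Complex.norm_two, mul_one, pow_one,
    Real.norm_of_nonneg Real.pi_pos.le]
  rw [mul_assoc (2 * Real.pi)]
  gcongr
  refine (norm_pairing_le v ξ).trans ?_
  rw [← mul_assoc]
  gcongr
  linarith

lemma norm_laplaceKernel_mul_le (hf : LaplaceDensity Ω f) {y : ι → ℝ} {z : ι → ℂ}
    (hz : imPart z - y ∈ Ω) (ξ : ι → ℝ) : ‖laplaceKernel z ξ * f ξ‖ ≤ expWeight y ξ * ‖f ξ‖ := by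
  by_cases hξ : ξ ∈ dualCone (Ω : Set (ι → ℝ))
  · rw [norm_mul, norm_laplaceKernel, ← sub_add_cancel (imPart z) y, expWeight_add]
    gcongr
    exact mul_le_of_le_one_left (expWeight_pos _ _).le (expWeight_le_one hz hξ)
  · simp [hf.eq_zero ξ hξ]

lemma integrable_norm_mul (hΩ : IsOpen (Ω : Set (ι → ℝ))) (hf : LaplaceDensity Ω f)
    {y : ι → ℝ} (hy : y ∈ Ω) : Integrable fun ξ => ‖ξ‖ * (expWeight y ξ * ‖f ξ‖) := by
  have hq : LaplaceDensity Ω fun ξ => (‖ξ‖ : ℂ) * f ξ :=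
    hf.mul_of_norm_le_pow hΩ (C := 1) (n := 1) (by fun_prop) fun ξ => by simp
  refine (hq.integrable_expWeight_smul hΩ hy).norm.congr (.of_forall fun ξ => ?_)
  simp only [norm_smul, norm_mul, Complex.norm_real, norm_norm,
    Real.norm_of_nonneg (expWeight_pos y ξ).le]
  ring

lemma norm_smul_laplaceKernelDeriv_le (hf : LaplaceDensity Ω f) {y : ι → ℝ} {z : ι → ℂ}
    (hz : imPart z - y ∈ Ω) (ξ : ι → ℝ) :
    ‖f ξ • laplaceKernelDeriv z ξ‖ ≤
      2 * Real.pi * Fintype.card ι * (‖ξ‖ * (expWeight y ξ * ‖f ξ‖)) := by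
  calc _ ≤ ‖laplaceKernel z ξ * f ξ‖ * (2 * Real.pi * (Fintype.card ι * ‖ξ‖)) := by
        rw [norm_smul, norm_mul, mul_right_comm, mul_comm ‖f ξ‖]
        gcongr
        exact norm_laplaceKernelDeriv_le z ξ
    _ ≤ expWeight y ξ * ‖f ξ‖ * (2 * Real.pi * (Fintype.card ι * ‖ξ‖)) := by
        gcongr
        exact hf.norm_laplaceKernel_mul_le hz ξ
    _ = _ := by ring

lemma integrable_and_hasFDerivAt_laplace (hΩ : IsOpen (Ω : Set (ι → ℝ)))
    (hf : LaplaceDensity Ω f) {z : ι → ℂ} (hz : z ∈ tube (Ω : Set (ι → ℝ))) :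
    Integrable (fun ξ => f ξ • laplaceKernelDeriv z ξ) ∧
      HasFDerivAt (laplace f) (∫ ξ, f ξ • laplaceKernelDeriv z ξ) z := by
  set y := (1 / 2 : ℝ) • imPart z with hy
  have hyΩ : y ∈ Ω := Ω.smul_mem one_half_pos hz
  have hmeas := hf.aestronglyMeasurable ⟨_, hz⟩
  have hnear : ∀ᶠ w in 𝓝 z, imPart w - y ∈ Ω := by
    have hcont : Continuous fun w => imPart w - y := by fun_prop
    refine (hΩ.preimage hcont).mem_nhds ?_
    rw [mem_preimage, show imPart z - y = y by rw [hy]; module]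
    exact hyΩ
  have hmeas' : AEStronglyMeasurable (fun ξ => f ξ • laplaceKernelDeriv z ξ) volume :=
    hmeas.smul (continuous_laplaceKernelDeriv z).aestronglyMeasurable
  have hmaj := (hf.integrable_norm_mul hΩ hyΩ).const_mul (2 * Real.pi * Fintype.card ι)
  have hbound := fun ξ w (hw : imPart w - y ∈ Ω) => hf.norm_smul_laplaceKernelDeriv_le hw ξ
  refine ⟨hmaj.mono' hmeas' (.of_forall fun ξ => hbound ξ z hnear.self_of_nhds),
    hasFDerivAt_integral_of_dominated_of_fderiv_le hnear
      (.of_forall fun w => (continuous_laplaceKernel w).aestronglyMeasurable.mul hmeas)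
      (hf.integrable_laplaceKernel_mul hΩ hz) hmeas' (.of_forall hbound) hmaj
      (.of_forall fun ξ w _ => (hasFDerivAt_laplaceKernel w ξ).mul_const (f ξ))⟩

lemma differentiableOn_laplace (hΩ : IsOpen (Ω : Set (ι → ℝ))) (hf : LaplaceDensity Ω f) :
    DifferentiableOn ℂ (laplace f) (tube (Ω : Set (ι → ℝ))) := fun _ hz =>
  (hf.integrable_and_hasFDerivAt_laplace hΩ hz).2.differentiableAt.differentiableWithinAt

lemma fderiv_laplace_apply (hΩ : IsOpen (Ω : Set (ι → ℝ))) (hf : LaplaceDensity Ω f) {z : ι → ℂ}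
    (hz : z ∈ tube (Ω : Set (ι → ℝ))) (v : ι → ℂ) :
    fderiv ℂ (laplace f) z v =
      laplace (fun ξ => 2 * Real.pi * Complex.I * pairing v ξ * f ξ) z := by
  obtain ⟨hint, hderiv⟩ := hf.integrable_and_hasFDerivAt_laplace hΩ hz
  rw [hderiv.fderiv, ContinuousLinearMap.integral_apply hint, laplace]
  refine integral_congr_ae (.of_forall fun ξ => ?_)
  simp only [_root_.smul_apply, laplaceKernelDeriv_apply, smul_eq_mul]
  ring

end LaplaceDensity

end LaplaceDerivative

section LorentzCone

lemma mem_Lambda3_iff {y : Fin 3 → ℝ} :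
    y ∈ Lambda3 ↔ 0 < y 0 ∧ y 1 ^ 2 + y 2 ^ 2 < y 0 ^ 2 := by
  refine ⟨fun ⟨h₁, h₂⟩ => ⟨by nlinarith [sq_nonneg (y 2)], by linarith⟩, fun ⟨h₁, h₂⟩ => ?_⟩
  have habs := abs_lt_of_sq_lt_sq (a := y 1) (by nlinarith [sq_nonneg (y 2)]) h₁.le
  exact ⟨by linarith [(abs_lt.1 habs).1], by linarith [h₂]⟩

lemma DeltaL_pos {y : Fin 3 → ℝ} (hy : y ∈ Lambda3) : 0 < DeltaL y := hy.2

lemma continuous_DeltaL : Continuous DeltaL := by unfold DeltaL; fun_prop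

lemma abs_DeltaL_le (y : Fin 3 → ℝ) : |DeltaL y| ≤ 2 * (1 + ‖y‖) ^ 2 := by
  have hcoord (i : Fin 3) : y i ^ 2 ≤ ‖y‖ ^ 2 := sq_le_sq' (abs_le.1 (norm_le_pi_norm y i)).1
    (abs_le.1 (norm_le_pi_norm y i)).2
  have := norm_nonneg y
  rw [abs_le, DeltaL]
  constructor <;>
    nlinarith [hcoord 0, hcoord 1, hcoord 2, sq_nonneg (y 0), sq_nonneg (y 1), sq_nonneg (y 2)]

lemma abs_mul_add_mul_lt {y w : Fin 3 → ℝ} (hy : y ∈ Lambda3) (hw : w ∈ Lambda3) :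
    |y 1 * w 1 + y 2 * w 2| < y 0 * w 0 := by
  rw [mem_Lambda3_iff] at hy hw
  refine abs_lt_of_sq_lt_sq ?_ (mul_pos hy.1 hw.1).le
  have hmul : (y 1 ^ 2 + y 2 ^ 2) * (w 1 ^ 2 + w 2 ^ 2) < y 0 ^ 2 * w 0 ^ 2 :=
    mul_lt_mul'' hy.2 hw.2 (by positivity) (by positivity)
  nlinarith [sq_nonneg (y 1 * w 2 - y 2 * w 1)]

lemma DeltaL_add_le {y w : Fin 3 → ℝ} (hy : y ∈ Lambda3) (hw : w ∈ Lambda3) :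
    DeltaL y + DeltaL w ≤ DeltaL (y + w) := by
  simp only [DeltaL, Pi.add_apply]
  linarith [(abs_lt.1 (abs_mul_add_mul_lt hy hw)).2]

/-- `Lambda3` as a convex cone. -/
def lorentzCone : ConvexCone ℝ (Fin 3 → ℝ) where
  carrier := Lambda3
  smul_mem' t ht y hy := by
    rw [mem_Lambda3_iff] at *
    refine ⟨mul_pos ht hy.1, ?_⟩
    simp only [Pi.smul_apply, smul_eq_mul, mul_pow, ← mul_add]
    exact mul_lt_mul_of_pos_left hy.2 (by positivity)
  add_mem' y hy w hw :=
    ⟨by simp only [Pi.add_apply]; linarith [hy.1, hw.1],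
      (add_pos (DeltaL_pos hy) (DeltaL_pos hw)).trans_le (DeltaL_add_le hy hw)⟩

lemma isOpen_lorentzCone : IsOpen (lorentzCone : Set (Fin 3 → ℝ)) :=
  (isOpen_lt continuous_const (by fun_prop : Continuous fun y : Fin 3 → ℝ => y 0 + y 1)).inter
    (isOpen_lt continuous_const continuous_DeltaL)

/-- The unit `(1, 0, 0)` of the Lorentz cone. -/
def lorentzUnit : Fin 3 → ℝ := ![1, 0, 0]

lemma lorentzUnit_mem : lorentzUnit ∈ lorentzCone := by
  change lorentzUnit ∈ Lambda3
  simp [mem_Lambda3_iff, lorentzUnit]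

lemma Lambda3_subset_dualCone : Lambda3 ⊆ dualCone Lambda3 := fun ξ hξ y hy => by
  simp only [dotProduct, Fin.sum_univ_three]
  linarith [(abs_lt.1 (abs_mul_add_mul_lt hy hξ)).1]

lemma sq_add_sq_le_of_mem_dualCone {ξ : Fin 3 → ℝ} (hξ : ξ ∈ dualCone Lambda3) :
    0 ≤ ξ 0 ∧ ξ 1 ^ 2 + ξ 2 ^ 2 ≤ ξ 0 ^ 2 := by
  have h0 : 0 ≤ ξ 0 := by
    simpa [lorentzUnit, dotProduct, Fin.sum_univ_three] using hξ lorentzUnit lorentzUnit_mem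
  refine ⟨h0, le_of_not_gt fun hlt => ?_⟩
  set s := Real.sqrt (ξ 1 ^ 2 + ξ 2 ^ 2)
  have hs : s ^ 2 = ξ 1 ^ 2 + ξ 2 ^ 2 := Real.sq_sqrt (by positivity)
  have hs0 : ξ 0 < s := Real.lt_sqrt_of_sq_lt hlt
  have hmem : ![2 * s - ξ 0, -ξ 1, -ξ 2] ∈ Lambda3 := by
    rw [mem_Lambda3_iff]
    simp only [Matrix.cons_val]
    exact ⟨by linarith, by nlinarith⟩
  have := hξ _ hmem
  simp only [dotProduct, Fin.sum_univ_three, Matrix.cons_val] at this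
  nlinarith

lemma dualCone_subset_closure : dualCone Lambda3 ⊆ closure Lambda3 := fun ξ hξ => by
  obtain ⟨h0, hsq⟩ := sq_add_sq_le_of_mem_dualCone hξ
  have hlim : Tendsto (fun t : ℝ => ξ + t • lorentzUnit) (𝓝[>] 0) (𝓝 ξ) :=
    (Continuous.tendsto' (by fun_prop) _ _ (by simp)).mono_left nhdsWithin_le_nhds
  refine mem_closure_of_tendsto hlim (eventually_nhdsWithin_of_forall fun t (ht : 0 < t) => ?_)
  rw [mem_Lambda3_iff]
  simp only [lorentzUnit, Pi.add_apply, Pi.smul_apply, smul_eq_mul, Matrix.cons_val]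
  exact ⟨by linarith, by nlinarith⟩

lemma dualCone_ae_eq_Lambda3 : dualCone Lambda3 =ᵐ[volume] Lambda3 := by
  have hnull : volume (dualCone Lambda3 \ Lambda3) = 0 := by
    refine measure_mono_null ?_ (lorentzCone.convex.addHaar_frontier volume)
    rw [isOpen_lorentzCone.frontier_eq]
    exact sdiff_subset_sdiff_left dualCone_subset_closure
  exact (ae_le_set.2 hnull).antisymm Lambda3_subset_dualCone.eventuallyLE

end LorentzCone

section BoxLaplace

variable {Ω : ConvexCone ℝ (Fin 3 → ℝ)} {f : (Fin 3 → ℝ) → ℂ}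

/-- The symbol `4π²Δ` of the box operator: `□ exp (2πi z · ξ) = 4π²Δ(ξ) exp (2πi z · ξ)`. -/
def boxSymbol (ξ : Fin 3 → ℝ) : ℝ := 4 * Real.pi ^ 2 * DeltaL ξ

lemma continuous_boxSymbol : Continuous boxSymbol := continuous_const.mul continuous_DeltaL

lemma boxSymbol_pos {ξ : Fin 3 → ℝ} (hξ : ξ ∈ Lambda3) : 0 < boxSymbol ξ := by
  have := DeltaL_pos hξ
  unfold boxSymbol
  positivity

lemma boxSymbol_mul_eq (f : (Fin 3 → ℝ) → ℂ) (ξ : Fin 3 → ℝ) :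
    boxSymbol ξ * f ξ =
      -(2 * Real.pi * Complex.I * ξ 0 * (2 * Real.pi * Complex.I * ξ 0 * f ξ)) +
        2 * Real.pi * Complex.I * ξ 1 * (2 * Real.pi * Complex.I * ξ 1 * f ξ) +
        2 * Real.pi * Complex.I * ξ 2 * (2 * Real.pi * Complex.I * ξ 2 * f ξ) := by
  simp only [boxSymbol, DeltaL]
  push_cast
  linear_combination (4 * (Real.pi : ℂ) ^ 2 * (ξ 0 ^ 2 - ξ 1 ^ 2 - ξ 2 ^ 2) * f ξ) * Complex.I_sq

lemma abs_boxSymbol_le (ξ : Fin 3 → ℝ) : |boxSymbol ξ| ≤ 8 * Real.pi ^ 2 * (1 + ‖ξ‖) ^ 2 := by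
  rw [boxSymbol, abs_mul, abs_of_pos (by positivity)]
  nlinarith [abs_DeltaL_le ξ, sq_pos_of_pos Real.pi_pos]

namespace LaplaceDensity

lemma coord_mul (hΩ : IsOpen (Ω : Set (Fin 3 → ℝ))) (hf : LaplaceDensity Ω f) (j : Fin 3) :
    LaplaceDensity Ω (fun ξ => 2 * Real.pi * Complex.I * ξ j * f ξ) := by
  simpa [pairing, Pi.single_apply] using hf.pairing_mul hΩ (Pi.single j 1)

lemma eqOn_pd_laplace (hΩ : IsOpen (Ω : Set (Fin 3 → ℝ))) (hf : LaplaceDensity Ω f)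
    (j : Fin 3) :
    EqOn (pd j (laplace f)) (laplace fun ξ => 2 * Real.pi * Complex.I * ξ j * f ξ)
      (tube (Ω : Set (Fin 3 → ℝ))) := fun z hz => by
  simpa [pd, pairing, Pi.single_apply] using hf.fderiv_laplace_apply hΩ hz (Pi.single j 1)

lemma boxSymbol_mul (hΩ : IsOpen (Ω : Set (Fin 3 → ℝ))) (hf : LaplaceDensity Ω f) :
    LaplaceDensity Ω (fun ξ => boxSymbol ξ * f ξ) :=
  hf.mul_of_norm_le_pow hΩ (Complex.continuous_ofReal.comp continuous_boxSymbol) fun ξ => by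
    simpa using abs_boxSymbol_le ξ

lemma eqOn_box_laplace (hΩ : IsOpen (Ω : Set (Fin 3 → ℝ))) (hf : LaplaceDensity Ω f) :
    EqOn (Box (laplace f)) (laplace fun ξ => boxSymbol ξ * f ξ) (tube (Ω : Set (Fin 3 → ℝ))) := by
  intro z hz
  have hpd (j : Fin 3) := (eqOn_pd (isOpen_tube hΩ) (hf.eqOn_pd_laplace hΩ j) j hz).trans
    ((hf.coord_mul hΩ j).eqOn_pd_laplace hΩ j hz)
  have hint (j : Fin 3) :=
    ((hf.coord_mul hΩ j).coord_mul hΩ j).integrable_laplaceKernel_mul hΩ hz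
  simp only [Box, hpd, laplace, boxSymbol_mul_eq, mul_add, mul_neg]
  rw [integral_add ((hint 0).fun_neg.fun_add (hint 1)) (hint 2),
    integral_add (hint 0).fun_neg (hint 1), integral_neg]

lemma boxSymbol_pow_mul (hΩ : IsOpen (Ω : Set (Fin 3 → ℝ))) (hf : LaplaceDensity Ω f) (m : ℕ) :
    LaplaceDensity Ω (fun ξ => (boxSymbol ξ : ℂ) ^ m * f ξ) := by
  induction m with
  | zero => simpa using hf
  | succ m ih => simpa only [pow_succ', mul_assoc] using ih.boxSymbol_mul hΩ

lemma eqOn_box_iterate_laplace (hΩ : IsOpen (Ω : Set (Fin 3 → ℝ))) (hf : LaplaceDensity Ω f)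
    (m : ℕ) :
    EqOn (Box^[m] (laplace f)) (laplace fun ξ => (boxSymbol ξ : ℂ) ^ m * f ξ)
      (tube (Ω : Set (Fin 3 → ℝ))) := by
  induction m with
  | zero => simp [EqOn]
  | succ m ih =>
    simp only [Function.iterate_succ_apply', pow_succ', mul_assoc]
    exact (eqOn_box (isOpen_tube hΩ) ih).trans ((hf.boxSymbol_pow_mul hΩ m).eqOn_box_laplace hΩ)

end LaplaceDensity

end BoxLaplace

section Plancherel

open scoped FourierTransform SchwartzMap ContDiff

lemma fourier_toLp_ae_eq {V : Type*} [NormedAddCommGroup V] [InnerProductSpace ℝ V]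
    [FiniteDimensional ℝ V] [MeasurableSpace V] [BorelSpace V] {h : V → ℂ} (h1 : Integrable h)
    (h2 : MemLp h 2 volume) : (𝓕 (h2.toLp h) : Lp ℂ 2 (volume : Measure V)) =ᵐ[volume] 𝓕 h := by
  have hcont : Continuous (𝓕 h) :=
    VectorFourier.fourierIntegral_continuous Real.continuous_fourierChar continuous_inner h1
  refine ae_eq_of_integral_contDiff_smul_eq ((Lp.memLp _).locallyIntegrable (by norm_num))
    hcont.locallyIntegrable fun φ φs φc => ?_
  set ψ : 𝓢(V, ℂ) := HasCompactSupport.toSchwartzMap (f := Complex.ofRealCLM ∘ φ)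
    (φc.comp_left rfl) (by fun_prop)
  have hψ : ∀ x, ψ x = (φ x : ℂ) := fun x => rfl
  have hflip := VectorFourier.integral_fourierIntegral_smul_eq_flip (L := innerₗ V)
    Real.continuous_fourierChar continuous_inner (ψ.integrable (μ := volume)) h1
  rw [flip_innerₗ] at hflip
  have hdistr := congrArg (fun T => T ψ) (Lp.fourier_toTemperedDistribution_eq (h2.toLp h))
  simp only [TemperedDistribution.fourier_apply, Lp.toTemperedDistribution_apply] at hdistr
  calc ∫ x, φ x • (𝓕 (h2.toLp h) : Lp ℂ 2 (volume : Measure V)) x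
      = ∫ x, ψ x • (𝓕 (h2.toLp h) : Lp ℂ 2 (volume : Measure V)) x := by simp [hψ]
    _ = ∫ x, 𝓕 ψ x • h2.toLp h x := hdistr.symm
    _ = ∫ x, 𝓕 ψ x • h x := integral_congr_ae (by
        filter_upwards [h2.coeFn_toLp] with x hx
        rw [hx])
    _ = ∫ x, ψ x • 𝓕 h x := hflip
    _ = ∫ x, φ x • 𝓕 h x := by simp [hψ]

lemma lintegral_enorm_fourier_sq {V : Type*} [NormedAddCommGroup V] [InnerProductSpace ℝ V]
    [FiniteDimensional ℝ V] [MeasurableSpace V] [BorelSpace V] {h : V → ℂ} (h1 : Integrable h)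
    (h2 : MemLp h 2 volume) : ∫⁻ x, ‖𝓕 h x‖ₑ ^ 2 = ∫⁻ x, ‖h x‖ₑ ^ 2 := by
  have hnorm : eLpNorm (𝓕 h) 2 volume = eLpNorm h 2 volume := by
    rw [← eLpNorm_congr_ae (fourier_toLp_ae_eq h1 h2), ← eLpNorm_congr_ae h2.coeFn_toLp]
    exact (ENNReal.toReal_eq_toReal_iff' (Lp.eLpNorm_ne_top _) (Lp.eLpNorm_ne_top _)).1
      (Lp.norm_fourier_eq (h2.toLp h))
  have hsq (f : V → ℂ) : eLpNorm f 2 volume ^ 2 = ∫⁻ x, ‖f x‖ₑ ^ 2 := by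
    simpa using eLpNorm_nnreal_pow_eq_lintegral (p := 2) (μ := volume) (f := f) two_ne_zero
  rw [← hsq, ← hsq, hnorm]

variable {ι : Type*} [Fintype ι]

lemma laplaceKernel_tubePoint (x y ξ : ι → ℝ) :
    laplaceKernel (tubePoint x y) ξ = expWeight y ξ * laplaceKernel (tubePoint x 0) ξ := by
  rw [laplaceKernel, laplaceKernel, pairing_tubePoint, pairing_tubePoint, expWeight,
    Complex.ofReal_exp, ← Complex.exp_add, zero_dotProduct]
  congr 1
  push_cast
  linear_combination (2 * (Real.pi : ℂ) * ((y ⬝ᵥ ξ : ℝ) : ℂ)) * Complex.I_sq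

lemma laplace_tubePoint (f : (ι → ℝ) → ℂ) (x y : ι → ℝ) :
    laplace f (tubePoint x y) = laplace (fun ξ => expWeight y ξ • f ξ) (tubePoint x 0) := by
  refine integral_congr_ae (.of_forall fun ξ => ?_)
  simp only [laplaceKernel_tubePoint x y, Complex.real_smul]
  ring

lemma laplace_tubePoint_zero (h : (ι → ℝ) → ℂ) (x : ι → ℝ) :
    laplace h (tubePoint x 0) =
      𝓕⁻ (fun v : EuclideanSpace ℝ ι => h v.ofLp) (WithLp.toLp 2 x) := by
  rw [Real.fourierInv_eq', ← (PiLp.volume_preserving_toLp ι).integral_comp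
    (MeasurableEquiv.toLp 2 (ι → ℝ)).measurableEmbedding]
  refine integral_congr_ae (.of_forall fun ξ => ?_)
  simp only [laplaceKernel, pairing_tubePoint, EuclideanSpace.inner_toLp_toLp, smul_eq_mul,
    zero_dotProduct, star_trivial]
  congr 2
  push_cast
  ring

lemma laplace_tubePoint_neg_zero (h : (ι → ℝ) → ℂ) (x : ι → ℝ) :
    laplace h (tubePoint (-x) 0) =
      𝓕 (fun v : EuclideanSpace ℝ ι => h v.ofLp) (WithLp.toLp 2 x) := by
  rw [laplace_tubePoint_zero, Real.fourierInv_eq_fourier_neg, WithLp.toLp_neg, neg_neg]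

lemma sliceNormSq_laplace_zero {h : (ι → ℝ) → ℂ} (h1 : Integrable h) (h2 : MemLp h 2 volume) :
    sliceNormSq (laplace h) 0 = ∫⁻ ξ, ‖h ξ‖ₑ ^ 2 := by
  have hplancherel := lintegral_enorm_fourier_sq
    ((PiLp.volume_preserving_ofLp ι).integrable_comp_of_integrable h1)
    (h2.comp_measurePreserving (PiLp.volume_preserving_ofLp ι))
  rw [sliceNormSq, ← (Measure.measurePreserving_neg (volume : Measure (ι → ℝ))).lintegral_comp_emb
    (MeasurableEquiv.neg _).measurableEmbedding]
  simp only [laplace_tubePoint_neg_zero]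
  rw [← (PiLp.volume_preserving_ofLp ι).lintegral_comp_emb
    (MeasurableEquiv.toLp 2 (ι → ℝ)).symm.measurableEmbedding (fun ξ => ‖h ξ‖ₑ ^ 2)]
  rw [(PiLp.volume_preserving_toLp ι).lintegral_comp_emb
    (MeasurableEquiv.toLp 2 (ι → ℝ)).measurableEmbedding
    (fun v => ‖𝓕 (fun v : EuclideanSpace ℝ ι => h v.ofLp) v‖ₑ ^ 2)]
  exact hplancherel

lemma laplace_laplace_neg {h : (ι → ℝ) → ℂ} (hc : Continuous h) (h1 : Integrable h)
    (h2 : Integrable fun ξ => laplace h (tubePoint (-ξ) 0)) (x : ι → ℝ) :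
    laplace (fun ξ => laplace h (tubePoint (-ξ) 0)) (tubePoint x 0) = h x := by
  simp only [laplace_tubePoint_neg_zero] at h2 ⊢
  rw [laplace_tubePoint_zero]
  exact congrFun ((hc.comp (PiLp.continuous_ofLp 2 _)).fourierInv_fourier_eq
    ((PiLp.volume_preserving_ofLp ι).integrable_comp_of_integrable h1)
    ((PiLp.volume_preserving_ofLp ι).integrable_comp_of_integrable h2)) (WithLp.toLp 2 x)

lemma LaplaceDensity.sliceNormSq_laplace {Ω : ConvexCone ℝ (ι → ℝ)} {f : (ι → ℝ) → ℂ}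
    (hΩ : IsOpen (Ω : Set (ι → ℝ))) (hf : LaplaceDensity Ω f) {y : ι → ℝ} (hy : y ∈ Ω) :
    sliceNormSq (laplace f) y = ∫⁻ ξ, ENNReal.ofReal (expWeight ((2 : ℝ) • y) ξ) * ‖f ξ‖ₑ ^ 2 := by
  simp only [sliceNormSq, laplace_tubePoint f _ y]
  rw [← sliceNormSq, sliceNormSq_laplace_zero (hf.integrable_expWeight_smul hΩ hy) (hf.memLp y hy)]
  refine lintegral_congr fun ξ => ?_
  rw [enorm_smul, mul_pow, Real.enorm_of_nonneg (expWeight_pos y ξ).le,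
    ← ENNReal.ofReal_pow (expWeight_pos y ξ).le, two_smul, expWeight_add, sq]

/-- The square of the Hardy norm on the tube over `Ω`. -/
def hardyNormSqOn (Ω : Set (ι → ℝ)) (F : (ι → ℂ) → ℂ) : ℝ≥0∞ := ⨆ y ∈ Ω, sliceNormSq F y

lemma tendsto_expWeight_smul (y ξ : ι → ℝ) :
    Tendsto (fun t : ℝ => expWeight (t • y) ξ) (𝓝[>] 0) (𝓝 1) := by
  have h : Continuous fun t : ℝ => expWeight (t • y) ξ := by
    simp only [expWeight, smul_dotProduct]; fun_prop
  simpa [expWeight] using (h.tendsto 0).mono_left nhdsWithin_le_nhds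

lemma LaplaceDensity.hardyNormSqOn_laplace {Ω : ConvexCone ℝ (ι → ℝ)} {f : (ι → ℝ) → ℂ}
    (hΩ : IsOpen (Ω : Set (ι → ℝ))) (hne : (Ω : Set (ι → ℝ)).Nonempty)
    (hf : LaplaceDensity Ω f) : hardyNormSqOn Ω (laplace f) = ∫⁻ ξ, ‖f ξ‖ₑ ^ 2 := by
  refine le_antisymm (iSup₂_le fun y hy => ?_) ?_
  · rw [hf.sliceNormSq_laplace hΩ hy]
    refine lintegral_mono fun ξ => ?_
    by_cases hξ : ξ ∈ dualCone (Ω : Set (ι → ℝ))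
    · exact mul_le_of_le_one_left zero_le
        (ENNReal.ofReal_le_one.2 (expWeight_le_one (Ω.smul_mem two_pos hy) hξ))
    · simp [hf.eq_zero ξ hξ]
  · obtain ⟨y, hy⟩ := hne
    have hlim (ξ : ι → ℝ) : Tendsto (fun t : ℝ => ENNReal.ofReal
        (expWeight (t • y) ξ) * ‖f ξ‖ₑ ^ 2) (𝓝[>] 0) (𝓝 (‖f ξ‖ₑ ^ 2)) := by
      simpa using ENNReal.Tendsto.mul_const
        (ENNReal.tendsto_ofReal (tendsto_expWeight_smul y ξ)) (.inl (by simp))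
    have hle : ∀ t > (0 : ℝ), ∫⁻ ξ, ENNReal.ofReal (expWeight (t • y) ξ) * ‖f ξ‖ₑ ^ 2 ≤
        hardyNormSqOn Ω (laplace f) := fun t ht => by
      have hty : (t / 2) • y ∈ Ω := Ω.smul_mem (half_pos ht) hy
      have h := hf.sliceNormSq_laplace hΩ hty
      rw [smul_smul, mul_div_cancel₀ t two_ne_zero] at h
      exact h.symm.trans_le (le_iSup₂_of_le _ hty le_rfl)
    calc ∫⁻ ξ, ‖f ξ‖ₑ ^ 2
        = ∫⁻ ξ, liminf (fun t : ℝ => ENNReal.ofReal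
            (expWeight (t • y) ξ) * ‖f ξ‖ₑ ^ 2) (𝓝[>] 0) :=
          lintegral_congr fun ξ => (hlim ξ).liminf_eq.symm
      _ ≤ liminf (fun t : ℝ => ∫⁻ ξ, ENNReal.ofReal
            (expWeight (t • y) ξ) * ‖f ξ‖ₑ ^ 2) (𝓝[>] 0) :=
          lintegral_liminf_le' fun t =>
            (continuous_expWeight _).measurable.ennreal_ofReal.aemeasurable.mul
              ((hf.aestronglyMeasurable ⟨y, hy⟩).enorm.pow_const 2)
      _ ≤ hardyNormSqOn Ω (laplace f) := liminf_le_of_le (by isBoundedDefault) fun b hb => by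
          obtain ⟨t, ht, hpos⟩ := (hb.and self_mem_nhdsWithin).exists
          exact ht.trans (hle t hpos)

end Plancherel

section Decay

variable {ι : Type*} [Fintype ι]

/-- The integrable majorant `(1 + ‖x‖)^(-(dim + 1))` on `ℝ^ι`. -/
def decay (x : ι → ℝ) : ℝ := ((1 + ‖x‖) ^ (Fintype.card ι + 1))⁻¹

lemma decay_pos (x : ι → ℝ) : 0 < decay x := by unfold decay; positivity

lemma integrable_decay : Integrable (decay : (ι → ℝ) → ℝ) := by
  refine (integrable_one_add_norm (E := ι → ℝ) (μ := volume) (r := Fintype.card ι + 1)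
    (by simp)).congr (.of_forall fun x => ?_)
  simp only [decay]
  rw [Real.rpow_neg (by positivity)]
  exact_mod_cast rfl

lemma decay_add_le (x t : ι → ℝ) : decay (x + t) ≤ (1 + ‖t‖) ^ (Fintype.card ι + 1) * decay x := by
  rw [decay, decay, ← div_eq_mul_inv, ← one_div, div_le_div_iff₀ (by positivity) (by positivity),
    one_mul, ← mul_pow]
  refine pow_le_pow_left₀ (by positivity) ?_ _
  have h := norm_sub_le (x + t) t
  rw [add_sub_cancel_right] at h
  nlinarith [norm_nonneg t, norm_nonneg (x + t)]

lemma norm_rePart_le (z : ι → ℂ) : ‖rePart z‖ ≤ ‖z‖ :=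
  (pi_norm_le_iff_of_nonneg (norm_nonneg z)).2 fun i =>
    (Complex.abs_re_le_norm _).trans (norm_le_pi_norm z i)

lemma norm_imPart_le (z : ι → ℂ) : ‖imPart z‖ ≤ ‖z‖ :=
  (pi_norm_le_iff_of_nonneg (norm_nonneg z)).2 fun i =>
    (Complex.abs_im_le_norm _).trans (norm_le_pi_norm z i)

end Decay

section SliceIntegral

variable {ι : Type*} [Fintype ι] {Ω : Set (ι → ℝ)} {H : (ι → ℂ) → ℂ}

/-- Near each point of `Ω`, the slices of `H` are dominated by a common multiple of `decay`. -/
def LocallyDecaying (Ω : Set (ι → ℝ)) (H : (ι → ℂ) → ℂ) : Prop :=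
  ∀ y ∈ Ω, ∃ C, ∀ᶠ y' in 𝓝 y, ∀ x, ‖H (tubePoint x y')‖ ≤ C * decay x

lemma LocallyDecaying.exists_norm_fderiv_le (hΩ : IsOpen Ω) (hH : DifferentiableOn ℂ H (tube Ω))
    (hdec : LocallyDecaying Ω H) {y : ι → ℝ} (hy : y ∈ Ω) :
    ∃ C, ∀ᶠ y' in 𝓝 y, ∀ x, ‖fderiv ℂ H (tubePoint x y')‖ ≤ C * decay x := by
  obtain ⟨C, hC⟩ := hdec y hy
  obtain ⟨r, hr, hball⟩ := Metric.eventually_nhds_iff_ball.1 (hC.and (hΩ.eventually_mem hy))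
  have hC0 : 0 ≤ C := nonneg_of_mul_nonneg_left
    ((norm_nonneg _).trans ((hball y (Metric.mem_ball_self hr)).1 0)) (decay_pos 0)
  refine ⟨2 * (C * (1 + r / 2) ^ (Fintype.card ι + 1)) / (r / 2), ?_⟩
  filter_upwards [Metric.ball_mem_nhds y (half_pos hr)] with y' hy' x
  have him : ∀ w ∈ Metric.ball (tubePoint x y') (r / 2),
      imPart w ∈ Metric.ball y r := fun w hw => by
    have h := norm_imPart_le (w - tubePoint x y')
    rw [show imPart (w - tubePoint x y') = imPart w - y' by ext i; simp [imPart, tubePoint],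
      ← dist_eq_norm, ← dist_eq_norm] at h
    rw [Metric.mem_ball] at *
    linarith [dist_triangle (imPart w) y' y]
  refine (norm_fderiv_le_of_norm_le (half_pos hr) (hH.mono fun w hw => (hball _ (him w hw)).2)
    (b := C * ((1 + r / 2) ^ (Fintype.card ι + 1) * decay x)) fun w hw => ?_).trans_eq (by ring)
  have hre := norm_rePart_le (w - tubePoint x y')
  rw [← dist_eq_norm] at hre
  have hw' : w = tubePoint (x + rePart (w - tubePoint x y')) (imPart w) := by
    ext i; simp [tubePoint, rePart, imPart, Complex.re_add_im]
  calc ‖H w‖ ≤ C * decay (x + rePart (w - tubePoint x y')) := by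
        conv_lhs => rw [hw']
        exact (hball _ (him w hw)).1 _
    _ ≤ C * ((1 + r / 2) ^ (Fintype.card ι + 1) * decay x) := by
        have := decay_pos x
        refine mul_le_mul_of_nonneg_left ((decay_add_le _ _).trans ?_) hC0
        gcongr
        exact hre.trans (Metric.mem_ball.1 hw).le

lemma hasDerivAt_comp_tubePoint {x y u v : ι → ℝ} {t : ℝ}
    (h : DifferentiableAt ℂ H (tubePoint (x + t • u) (y + t • v))) :
    HasDerivAt (fun s : ℝ => H (tubePoint (x + s • u) (y + s • v)))
      (fderiv ℂ H (tubePoint (x + t • u) (y + t • v)) (tubePoint u v)) t := by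
  have hline : HasDerivAt (fun s : ℝ => tubePoint (x + s • u) (y + s • v)) (tubePoint u v) t := by
    have := ((Complex.ofRealCLM.hasDerivAt (x := t)).smul_const (tubePoint u v)).const_add
      (tubePoint x y)
    refine (this.congr_deriv (by simp)).congr_of_eventuallyEq (.of_forall fun s => ?_)
    ext i
    simp [tubePoint]
    ring
  exact (h.hasFDerivAt.restrictScalars ℝ).comp_hasDerivAt t hline

lemma LocallyDecaying.integrable_slice (hH : DifferentiableOn ℂ H (tube Ω))
    (hdec : LocallyDecaying Ω H) {y : ι → ℝ} (hy : y ∈ Ω) :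
    Integrable fun x => H (tubePoint x y) := by
  obtain ⟨C, hC⟩ := hdec y hy
  exact (integrable_decay.const_mul C).mono'
    (continuous_slice hH.continuousOn hy).aestronglyMeasurable
    (.of_forall hC.self_of_nhds)

lemma LocallyDecaying.integrable_fderiv_slice (hΩ : IsOpen Ω) (hH : DifferentiableOn ℂ H (tube Ω))
    (hdec : LocallyDecaying Ω H) {y : ι → ℝ} (hy : y ∈ Ω) (v : ι → ℂ) :
    Integrable fun x => fderiv ℂ H (tubePoint x y) v := by
  obtain ⟨C, hC⟩ := hdec.exists_norm_fderiv_le hΩ hH hy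
  refine ((integrable_decay.const_mul C).mul_const ‖v‖).mono' (continuous_slice
    (differentiableOn_fderiv_apply (isOpen_tube hΩ) hH v).continuousOn hy).aestronglyMeasurable
    (.of_forall fun x => ?_)
  exact ((fderiv ℂ H _).le_opNorm v).trans
    (mul_le_mul_of_nonneg_right (hC.self_of_nhds x) (norm_nonneg v))

lemma LocallyDecaying.integral_fderiv_slice_eq_zero (hΩ : IsOpen Ω)
    (hH : DifferentiableOn ℂ H (tube Ω)) (hdec : LocallyDecaying Ω H) {y : ι → ℝ} (hy : y ∈ Ω)
    (u : ι → ℝ) : ∫ x, fderiv ℂ H (tubePoint x y) (tubePoint 0 u) = 0 := by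
  have hline (x : ι → ℝ) : HasLineDerivAt ℝ (fun x => H (tubePoint x y))
      (fderiv ℂ H (tubePoint x y) (tubePoint u 0)) x u := by
    simpa [HasLineDerivAt] using hasDerivAt_comp_tubePoint (x := x) (y := y) (u := u) (v := 0)
      (t := 0)
      (by simpa using hH.differentiableAt ((isOpen_tube hΩ).mem_nhds (tubePoint_mem_tube.2 hy)))
  have hparts := integral_bilinear_hasLineDerivAt_right_eq_neg_left_of_integrable
    (μ := (volume : Measure (ι → ℝ))) (B := ContinuousLinearMap.mul ℝ ℂ) (v := u)
    (f := fun _ => (1 : ℂ)) (f' := fun _ => 0) (g := fun x => H (tubePoint x y)) (by simp)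
    (by simpa using hdec.integrable_fderiv_slice hΩ hH hy (tubePoint u 0))
    (by simpa using hdec.integrable_slice hH hy)
    (fun x _ => by simpa [HasLineDerivAt] using hasDerivAt_const (0 : ℝ) (1 : ℂ))
    (fun x _ => hline x)
  have hI : tubePoint 0 u = Complex.I • tubePoint u 0 := by
    ext i; simp [tubePoint, mul_comm]
  simp only [hI, map_smul, integral_smul]
  simpa using hparts

lemma LocallyDecaying.hasDerivAt_integral_slice (hΩ : IsOpen Ω)
    (hH : DifferentiableOn ℂ H (tube Ω)) (hdec : LocallyDecaying Ω H) {y u : ι → ℝ} {t : ℝ}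
    (hy : y + t • u ∈ Ω) : HasDerivAt (fun s : ℝ => ∫ x, H (tubePoint x (y + s • u))) 0 t := by
  obtain ⟨C, hC⟩ := hdec.exists_norm_fderiv_le hΩ hH hy
  have hcont : Tendsto (fun s : ℝ => y + s • u) (𝓝 t) (𝓝 (y + t • u)) :=
    (by fun_prop : Continuous fun s : ℝ => y + s • u).tendsto t
  rw [← hdec.integral_fderiv_slice_eq_zero hΩ hH hy u]
  refine (hasDerivAt_integral_of_dominated_loc_of_deriv_le
    (F' := fun s x => fderiv ℂ H (tubePoint x (y + s • u)) (tubePoint 0 u))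
    (hcont.eventually (hC.and (hΩ.eventually_mem hy)))
    ((hcont.eventually (hΩ.eventually_mem hy)).mono fun s hs =>
      (continuous_slice hH.continuousOn hs).aestronglyMeasurable)
    (hdec.integrable_slice hH hy)
    (hdec.integrable_fderiv_slice hΩ hH hy _).aestronglyMeasurable
    (.of_forall fun x s hs => ((fderiv ℂ H _).le_opNorm _).trans
      (mul_le_mul_of_nonneg_right (hs.1 x) (norm_nonneg _)))
    ((integrable_decay.const_mul C).mul_const _) (.of_forall fun x s hs => ?_)).2
  simpa using hasDerivAt_comp_tubePoint (x := x) (y := y) (u := 0) (v := u) (t := s)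
    (by simpa using hH.differentiableAt ((isOpen_tube hΩ).mem_nhds (tubePoint_mem_tube.2 hs.2)))

lemma LocallyDecaying.integral_slice_eq (hΩ : IsOpen Ω) (hconv : Convex ℝ Ω)
    (hH : DifferentiableOn ℂ H (tube Ω)) (hdec : LocallyDecaying Ω H) {y₀ y₁ : ι → ℝ}
    (h₀ : y₀ ∈ Ω) (h₁ : y₁ ∈ Ω) :
    ∫ x, H (tubePoint x y₀) = ∫ x, H (tubePoint x y₁) := by
  have hderiv : ∀ t ∈ Icc (0 : ℝ) 1,
      HasDerivAt (fun s : ℝ => ∫ x, H (tubePoint x (y₀ + s • (y₁ - y₀)))) 0 t := fun t ht =>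
    hdec.hasDerivAt_integral_slice hΩ hH (hconv.add_smul_sub_mem h₀ h₁ ht)
  have hconst := constant_of_has_deriv_right_zero
    (fun t ht => (hderiv t ht).continuousAt.continuousWithinAt)
    (fun t ht => (hderiv t (Ico_subset_Icc_self ht)).hasDerivWithinAt) 1
    (right_mem_Icc.2 zero_le_one)
  simpa using hconst.symm

end SliceIntegral

section PaleyWiener

variable {ι : Type*} [Fintype ι] {F : (ι → ℂ) → ℂ}

/-- All slices of `F` over `Ω` are dominated by a common multiple of `decay`. -/
def RapidlyDecaying (Ω : Set (ι → ℝ)) (F : (ι → ℂ) → ℂ) : Prop :=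
  ∃ M, ∀ y ∈ Ω, ∀ x, ‖F (tubePoint x y)‖ ≤ M * decay x

/-- The integral of `exp (-2πi z · ξ) F z` over the slice `ℝ^ι + iy`. For rapidly decaying
holomorphic `F` it does not depend on `y`, and `F` is its Laplace transform. -/
def sliceTransform (F : (ι → ℂ) → ℂ) (y ξ : ι → ℝ) : ℂ :=
  ∫ x, laplaceKernel (-tubePoint x y) ξ * F (tubePoint x y)

lemma laplaceKernel_neg_tubePoint (x y ξ : ι → ℝ) :
    laplaceKernel (-tubePoint x y) ξ =
      expWeight (-y) ξ * laplaceKernel (tubePoint (-ξ) 0) x := by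
  have hneg : -tubePoint x y = tubePoint (-x) (-y) := by ext i; simp [tubePoint]; ring
  have hswap : pairing (tubePoint (-x) 0) ξ = pairing (tubePoint (-ξ) 0) x := by
    rw [pairing_tubePoint, pairing_tubePoint, neg_dotProduct, neg_dotProduct, dotProduct_comm,
      zero_dotProduct, zero_dotProduct]
  rw [hneg, laplaceKernel_tubePoint, laplaceKernel, hswap, laplaceKernel]

lemma norm_laplaceKernel_neg_tubePoint (x y ξ : ι → ℝ) :
    ‖laplaceKernel (-tubePoint x y) ξ‖ = expWeight (-y) ξ := by
  rw [norm_laplaceKernel]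
  congr 1
  ext i
  simp [imPart, tubePoint]

lemma expWeight_smul_sliceTransform (F : (ι → ℂ) → ℂ) (y ξ : ι → ℝ) :
    expWeight y ξ • sliceTransform F y ξ =
      laplace (fun x => F (tubePoint x y)) (tubePoint (-ξ) 0) := by
  have hinv : (expWeight y ξ : ℂ) * expWeight (-y) ξ = 1 := by
    rw [← Complex.ofReal_mul, ← expWeight_add, add_neg_cancel]
    simp [expWeight]
  simp only [sliceTransform, laplaceKernel_neg_tubePoint, mul_assoc, integral_const_mul]
  rw [Complex.real_smul, ← mul_assoc, hinv, one_mul, laplace]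

lemma norm_sliceTransform_le {y : ι → ℝ} {M : ℝ}
    (hM : ∀ x, ‖F (tubePoint x y)‖ ≤ M * decay x) (ξ : ι → ℝ) :
    ‖sliceTransform F y ξ‖ ≤ (∫ x : ι → ℝ, M * decay x) * expWeight (-y) ξ := by
  rw [← integral_mul_const]
  refine norm_integral_le_of_norm_le ((integrable_decay.const_mul M).mul_const _)
    (.of_forall fun x => ?_)
  rw [norm_mul, norm_laplaceKernel_neg_tubePoint, mul_comm]
  exact mul_le_mul_of_nonneg_right (hM x) (expWeight_pos _ _).le

lemma continuous_sliceTransform {y : ι → ℝ} {M : ℝ} (hc : Continuous fun x => F (tubePoint x y))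
    (hM : ∀ x, ‖F (tubePoint x y)‖ ≤ M * decay x) : Continuous (sliceTransform F y) := by
  refine continuous_iff_continuousAt.2 fun ξ₀ => ?_
  have hw : Continuous (expWeight (-y)) := continuous_expWeight _
  obtain ⟨B, hB⟩ : ∃ B, ∀ᶠ ξ in 𝓝 ξ₀, expWeight (-y) ξ ≤ B :=
    ⟨_, (hw.tendsto ξ₀).eventually_le_const (lt_add_one _)⟩
  refine continuousAt_of_dominated (bound := fun x => B * (M * decay x)) (.of_forall fun ξ => ?_)
    (hB.mono fun ξ hξ => .of_forall fun x => ?_) ((integrable_decay.const_mul M).const_mul B)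
    (.of_forall fun x => ((continuous_laplaceKernel _).mul continuous_const).continuousAt)
  · refine Continuous.aestronglyMeasurable (.mul ?_ hc)
    unfold laplaceKernel pairing tubePoint
    fun_prop
  · rw [norm_mul, norm_laplaceKernel_neg_tubePoint]
    exact mul_le_mul hξ (hM x) (norm_nonneg _) ((expWeight_pos _ _).le.trans hξ)

namespace RapidlyDecaying

lemma locallyDecaying_laplaceKernel_mul {Ω : Set (ι → ℝ)} (hΩ : IsOpen Ω)
    (hdec : RapidlyDecaying Ω F) (ξ : ι → ℝ) :
    LocallyDecaying Ω fun z => laplaceKernel (-z) ξ * F z := by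
  obtain ⟨M, hM⟩ := hdec
  intro y hy
  have hcont : Continuous fun y' : ι → ℝ => expWeight (-y') ξ := by
    unfold expWeight dotProduct; fun_prop
  refine ⟨(expWeight (-y) ξ + 1) * M, ?_⟩
  filter_upwards [(hcont.tendsto y).eventually_le_const (lt_add_one _), hΩ.eventually_mem hy]
    with y' hle hy' x
  rw [norm_mul, norm_laplaceKernel_neg_tubePoint, mul_assoc]
  exact mul_le_mul hle (hM y' hy' x) (norm_nonneg _) ((expWeight_pos _ _).le.trans hle)

lemma sliceTransform_eq {Ω : Set (ι → ℝ)} (hΩ : IsOpen Ω) (hconv : Convex ℝ Ω)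
    (hF : DifferentiableOn ℂ F (tube Ω)) (hdec : RapidlyDecaying Ω F) {y₀ y₁ : ι → ℝ}
    (h₀ : y₀ ∈ Ω) (h₁ : y₁ ∈ Ω) : sliceTransform F y₀ = sliceTransform F y₁ := by
  refine funext fun ξ =>
    (hdec.locallyDecaying_laplaceKernel_mul hΩ ξ).integral_slice_eq hΩ hconv (.mul ?_ hF) h₀ h₁
  exact fun z _ => ((hasFDerivAt_laplaceKernel (-z) ξ).differentiableAt.comp z
    differentiableAt_id.neg).differentiableWithinAt

variable {Ω : ConvexCone ℝ (ι → ℝ)}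

lemma laplaceDensity_sliceTransform (hΩ : IsOpen (Ω : Set (ι → ℝ)))
    (hF : DifferentiableOn ℂ F (tube (Ω : Set (ι → ℝ)))) (hdec : RapidlyDecaying Ω F) {y₀ : ι → ℝ}
    (h₀ : y₀ ∈ Ω) : LaplaceDensity Ω (sliceTransform F y₀) := by
  obtain ⟨M, hM⟩ := id hdec
  set J := ∫ x : ι → ℝ, M * decay x
  have hbound : ∀ y ∈ Ω, ∀ t > (0 : ℝ), ∀ ξ,
      ‖sliceTransform F y₀ ξ‖ ≤ J * expWeight (t • -y) ξ := fun y hy t ht ξ => by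
    have hty := Ω.smul_mem ht hy
    rw [hdec.sliceTransform_eq hΩ Ω.convex hF h₀ hty, smul_neg]
    exact norm_sliceTransform_le (hM _ hty) ξ
  refine .of_norm_le (C := J) hΩ (fun ξ hξ => ?_)
    (continuous_sliceTransform (continuous_slice hF.continuousOn h₀)
      (hM y₀ h₀)).aestronglyMeasurable
    (fun ξ => ?_)
  · obtain ⟨y, hy, hneg⟩ : ∃ y ∈ Ω, y ⬝ᵥ ξ < 0 := by simpa [dualCone] using hξ
    have hlim : Tendsto (fun t : ℝ => J * expWeight (t • -y) ξ) atTop (𝓝 (J * 0)) := by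
      refine (Real.tendsto_exp_atBot.comp ?_).const_mul J
      simp only [smul_dotProduct, neg_dotProduct, smul_eq_mul]
      exact (tendsto_id.atTop_mul_const (neg_pos.2 hneg)).const_mul_atTop_of_neg
        (by linarith [Real.pi_pos])
    rw [mul_zero] at hlim
    exact norm_le_zero_iff.1 (ge_of_tendsto hlim
      ((eventually_gt_atTop 0).mono fun t ht => hbound y hy t ht ξ))
  · have hlim := (tendsto_expWeight_smul (-y₀) ξ).const_mul J
    rw [mul_one] at hlim
    exact ge_of_tendsto hlim (eventually_mem_nhdsWithin.mono fun t ht => hbound y₀ h₀ t ht ξ)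

theorem exists_laplace_eqOn (hΩ : IsOpen (Ω : Set (ι → ℝ))) (hne : (Ω : Set (ι → ℝ)).Nonempty)
    (hF : DifferentiableOn ℂ F (tube (Ω : Set (ι → ℝ)))) (hdec : RapidlyDecaying Ω F) :
    ∃ f, LaplaceDensity Ω f ∧ EqOn F (laplace f) (tube Ω) := by
  obtain ⟨M, hM⟩ := id hdec
  obtain ⟨y₀, h₀⟩ := hne
  have hf := hdec.laplaceDensity_sliceTransform hΩ hF h₀
  refine ⟨_, hf, fun z hz => ?_⟩
  have hslice (ξ : ι → ℝ) : expWeight (imPart z) ξ • sliceTransform F y₀ ξ =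
      laplace (fun x => F (tubePoint x (imPart z))) (tubePoint (-ξ) 0) := by
    rw [hdec.sliceTransform_eq hΩ Ω.convex hF h₀ hz, expWeight_smul_sliceTransform]
  have hcont := continuous_slice hF.continuousOn (mem_tube.1 hz)
  have hint : Integrable fun x => F (tubePoint x (imPart z)) :=
    (integrable_decay.const_mul M).mono' hcont.aestronglyMeasurable (.of_forall (hM _ hz))
  have hinv := laplace_laplace_neg hcont hint
    (by simpa only [← hslice] using hf.integrable_expWeight_smul hΩ hz) (rePart z)
  simp only [← hslice] at hinv
  rw [← laplace_tubePoint, tubePoint_rePart_imPart] at hinv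
  exact hinv.symm

end RapidlyDecaying

end PaleyWiener

section GammaIntegral

lemma setLIntegral_comp_mulVec {ι : Type*} [Fintype ι] [DecidableEq ι] {M : Matrix ι ι ℝ}
    (hM : M.det ≠ 0) {φ : (ι → ℝ) → ℝ≥0∞} (hφ : Measurable φ) {s : Set (ι → ℝ)}
    (hs : MeasurableSet s) : ∫⁻ y in {y | M.mulVec y ∈ s}, φ (M.mulVec y) =
      ENNReal.ofReal |M.det⁻¹| * ∫⁻ w in s, φ w := by
  have hmeas : Measurable (Matrix.toLin' M) :=
    (LinearMap.continuous_of_finiteDimensional _).measurable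
  rw [← smul_eq_mul, ← lintegral_smul_measure, ← Measure.restrict_smul,
    ← Real.map_matrix_volume_pi_eq_smul_volume_pi hM, setLIntegral_map hs hφ hmeas]
  rfl

/-- The matrix of the Lorentz cone automorphism `Y ↦ TYTᵗ`, where `y` is identified with the
symmetric matrix `Y = !![y₁ + y₂, y₃; y₃, y₁ - y₂]`, so that `Δ y = det Y`, and
`T = !![α, β; 0, δ]`. -/
def lorentzMatrix (α β δ : ℝ) : Matrix (Fin 3) (Fin 3) ℝ :=
  !![(α ^ 2 + β ^ 2 + δ ^ 2) / 2, (α ^ 2 - β ^ 2 - δ ^ 2) / 2, α * β;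
     (α ^ 2 + β ^ 2 - δ ^ 2) / 2, (α ^ 2 - β ^ 2 + δ ^ 2) / 2, α * β;
     β * δ, -(β * δ), α * δ]

lemma det_lorentzMatrix (α β δ : ℝ) : (lorentzMatrix α β δ).det = (α * δ) ^ 3 := by
  simp only [lorentzMatrix, Matrix.det_fin_three, Matrix.of_apply, Matrix.cons_val]
  ring

lemma DeltaL_lorentzMatrix_mulVec (α β δ : ℝ) (y : Fin 3 → ℝ) :
    DeltaL ((lorentzMatrix α β δ).mulVec y) = (α * δ) ^ 2 * DeltaL y := by
  simp only [lorentzMatrix, DeltaL, Matrix.mulVec, dotProduct, Fin.sum_univ_three, Matrix.of_apply,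
    Matrix.cons_val]
  ring

lemma mem_Lambda3_iff_sub_pos {y : Fin 3 → ℝ} : y ∈ Lambda3 ↔ 0 < y 0 - y 1 ∧ 0 < DeltaL y := by
  refine and_congr_left fun h => ?_
  have hprod : 0 < (y 0 + y 1) * (y 0 - y 1) := by nlinarith [sq_nonneg (y 2)]
  exact ⟨fun hpos => pos_of_mul_pos_right hprod hpos.le,
    fun hpos => pos_of_mul_pos_left hprod hpos.le⟩

lemma lorentzMatrix_mulVec_mem {α β δ : ℝ} (hα : 0 < α) (hδ : 0 < δ) {y : Fin 3 → ℝ} :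
    (lorentzMatrix α β δ).mulVec y ∈ Lambda3 ↔ y ∈ Lambda3 := by
  have hsub : (lorentzMatrix α β δ).mulVec y 0 - (lorentzMatrix α β δ).mulVec y 1 =
      δ ^ 2 * (y 0 - y 1) := by
    simp only [lorentzMatrix, Matrix.mulVec, dotProduct, Fin.sum_univ_three, Matrix.of_apply,
      Matrix.cons_val]
    ring
  rw [mem_Lambda3_iff_sub_pos, mem_Lambda3_iff_sub_pos, hsub, DeltaL_lorentzMatrix_mulVec,
    mul_pos_iff_of_pos_left (by positivity), mul_pos_iff_of_pos_left (by positivity)]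

lemma setLIntegral_comp_lorentzMatrix {α β δ : ℝ} (hα : 0 < α) (hδ : 0 < δ)
    {φ : (Fin 3 → ℝ) → ℝ≥0∞} (hφ : Measurable φ) :
    ∫⁻ y in Lambda3, φ ((lorentzMatrix α β δ).mulVec y) =
      ENNReal.ofReal ((α * δ) ^ (-3 : ℝ)) * ∫⁻ w in Lambda3, φ w := by
  have hk : 0 < α * δ := mul_pos hα hδ
  have hdet : |(lorentzMatrix α β δ).det⁻¹| = (α * δ) ^ (-3 : ℝ) := by
    rw [det_lorentzMatrix, abs_of_pos (by positivity), Real.rpow_neg hk.le]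
    exact_mod_cast rfl
  have hmeas : MeasurableSet Lambda3 := isOpen_lorentzCone.measurableSet
  rw [← hdet, ← setLIntegral_comp_mulVec (by rw [det_lorentzMatrix]; positivity) hφ hmeas]
  simp only [lorentzMatrix_mulVec_mem hα hδ, ofPred_mem_eq]

/-- `T` is the Cholesky factor of `ξ`. -/
lemma exists_lorentzMatrix_zero_eq {ξ : Fin 3 → ℝ} (hξ : ξ ∈ Lambda3) :
    ∃ α > 0, ∃ β, ∃ δ > 0, lorentzMatrix α β δ 0 = ξ ∧ DeltaL ξ = (α * δ) ^ 2 := by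
  have hsum : 0 < ξ 0 + ξ 1 := hξ.1
  have hα : 0 < √(ξ 0 + ξ 1) := Real.sqrt_pos.2 hsum
  have hα2 : √(ξ 0 + ξ 1) ^ 2 = ξ 0 + ξ 1 := Real.sq_sqrt hsum.le
  have hδ : 0 < √(DeltaL ξ) := Real.sqrt_pos.2 (DeltaL_pos hξ)
  have hδ2 : √(DeltaL ξ) ^ 2 = DeltaL ξ := Real.sq_sqrt (DeltaL_pos hξ).le
  refine ⟨_, hα, ξ 2 / √(ξ 0 + ξ 1), √(DeltaL ξ) / √(ξ 0 + ξ 1), div_pos hδ hα, ?_, ?_⟩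
  · have hdiff : (ξ 2 / √(ξ 0 + ξ 1)) ^ 2 + (√(DeltaL ξ) / √(ξ 0 + ξ 1)) ^ 2 = ξ 0 - ξ 1 := by
      rw [div_pow, div_pow, hα2, hδ2, ← add_div, div_eq_iff hsum.ne', DeltaL]
      ring
    ext i
    fin_cases i <;> simp [lorentzMatrix]
    · linarith
    · linarith
    · field_simp
  · rw [mul_div_cancel₀ _ hα.ne', hδ2]

/-- The gamma integral `∫_Λ exp (-4π y · ξ) Δ(y)^p dy` of the Lorentz cone. -/
def gammaIntegral (p : ℝ) (ξ : Fin 3 → ℝ) : ℝ≥0∞ :=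
  ∫⁻ y in Lambda3, ENNReal.ofReal (expWeight ((2 : ℝ) • y) ξ) * ENNReal.ofReal (DeltaL y ^ p)

lemma measurable_gammaIntegrand (p : ℝ) : Measurable fun z : (Fin 3 → ℝ) × (Fin 3 → ℝ) =>
    ENNReal.ofReal (expWeight ((2 : ℝ) • z.1) z.2) * ENNReal.ofReal (DeltaL z.1 ^ p) := by
  unfold expWeight DeltaL dotProduct; fun_prop

lemma measurable_gammaIntegrand_left (p : ℝ) (ξ : Fin 3 → ℝ) : Measurable fun y : Fin 3 → ℝ =>
    ENNReal.ofReal (expWeight ((2 : ℝ) • y) ξ) * ENNReal.ofReal (DeltaL y ^ p) := by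
  unfold expWeight DeltaL dotProduct; fun_prop

lemma gammaIntegral_lorentzMatrix (p : ℝ) {α β δ : ℝ} (hα : 0 < α) (hδ : 0 < δ) :
    gammaIntegral p (lorentzMatrix α β δ 0) =
      ENNReal.ofReal ((α * δ) ^ (-(2 * p + 3))) * gammaIntegral p lorentzUnit := by
  have hk : 0 < α * δ := mul_pos hα hδ
  set M := lorentzMatrix α β δ
  have hweight (y : Fin 3 → ℝ) :
      expWeight ((2 : ℝ) • y) (M 0) = expWeight ((2 : ℝ) • M.mulVec y) lorentzUnit := by
    simp only [expWeight, smul_dotProduct]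
    rw [dotProduct_comm y]
    simp [Matrix.mulVec, lorentzUnit, dotProduct, Fin.sum_univ_three]
  have hDelta : ∀ y ∈ Lambda3,
      DeltaL y ^ p = (α * δ) ^ (-(2 * p)) * DeltaL (M.mulVec y) ^ p := fun y hy => by
    rw [DeltaL_lorentzMatrix_mulVec, Real.mul_rpow (by positivity) (DeltaL_pos hy).le, ← mul_assoc,
      ← Real.rpow_natCast (α * δ), ← Real.rpow_mul hk.le, ← Real.rpow_add hk]
    simp
  calc gammaIntegral p (M 0)
      = ∫⁻ y in Lambda3, ENNReal.ofReal ((α * δ) ^ (-(2 * p))) *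
          (ENNReal.ofReal (expWeight ((2 : ℝ) • M.mulVec y) lorentzUnit) *
            ENNReal.ofReal (DeltaL (M.mulVec y) ^ p)) := by
        refine setLIntegral_congr_fun isOpen_lorentzCone.measurableSet fun y hy => ?_
        simp only [hweight, hDelta y hy, ENNReal.ofReal_mul (Real.rpow_nonneg hk.le _)]
        ring
    _ = ENNReal.ofReal ((α * δ) ^ (-(2 * p))) *
          (ENNReal.ofReal ((α * δ) ^ (-3 : ℝ)) * gammaIntegral p lorentzUnit) := by
        rw [lintegral_const_mul' _ _ ENNReal.ofReal_ne_top]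
        rw [setLIntegral_comp_lorentzMatrix hα hδ (measurable_gammaIntegrand_left p lorentzUnit),
          gammaIntegral]
    _ = _ := by
        rw [← mul_assoc, ← ENNReal.ofReal_mul (by positivity), ← Real.rpow_add hk, neg_add]

lemma gammaIntegral_eq (p : ℝ) {ξ : Fin 3 → ℝ} (hξ : ξ ∈ Lambda3) :
    gammaIntegral p ξ =
      ENNReal.ofReal (DeltaL ξ ^ (-(p + 3 / 2))) * gammaIntegral p lorentzUnit := by
  obtain ⟨α, hα, β, δ, hδ, hrow, hDelta⟩ := exists_lorentzMatrix_zero_eq hξ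
  have hk : 0 < α * δ := mul_pos hα hδ
  rw [hDelta, ← hrow, gammaIntegral_lorentzMatrix p hα hδ, ← Real.rpow_natCast (α * δ),
    ← Real.rpow_mul hk.le]
  congr 4
  push_cast
  ring

lemma gammaIntegral_pos (p : ℝ) (ξ : Fin 3 → ℝ) : 0 < gammaIntegral p ξ := by
  rw [gammaIntegral, setLIntegral_pos_iff (measurable_gammaIntegrand_left p ξ)]
  refine (isOpen_lorentzCone.measure_pos volume ⟨_, lorentzUnit_mem⟩).trans_le
    (measure_mono fun y hy => ⟨?_, hy⟩)
  exact (ENNReal.mul_pos (ENNReal.ofReal_pos.2 (expWeight_pos _ _)).ne'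
    (ENNReal.ofReal_pos.2 (Real.rpow_pos_of_pos (DeltaL_pos hy) p)).ne').ne'

lemma gammaIntegral_lorentzUnit_lt_top {p : ℝ} (hp : 0 ≤ p) :
    gammaIntegral p lorentzUnit < ⊤ := by
  have hmeas : MeasurableSet (dualCone Lambda3) := (isClosed_dualCone Lambda3).measurableSet
  have hone : LaplaceDensity Lambda3 ((dualCone Lambda3).indicator 1) :=
    .of_norm_le (C := 1) isOpen_lorentzCone (fun ξ hξ => indicator_of_notMem hξ _)
      (stronglyMeasurable_one.indicator hmeas).aestronglyMeasurable fun ξ => by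
        simpa using norm_indicator_le_norm_self (1 : (Fin 3 → ℝ) → ℂ) ξ
  have hle (y : Fin 3 → ℝ) : ‖((|DeltaL y| ^ p : ℝ) : ℂ)‖ ≤ 2 ^ p * (1 + ‖y‖) ^ ⌈2 * p⌉₊ := by
    rw [Complex.norm_real, Real.norm_of_nonneg (by positivity)]
    have h1 : 1 ≤ 1 + ‖y‖ := le_add_of_nonneg_right (norm_nonneg y)
    calc |DeltaL y| ^ p ≤ (2 * (1 + ‖y‖) ^ 2) ^ p := by gcongr; exact abs_DeltaL_le y
      _ = 2 ^ p * (1 + ‖y‖) ^ (2 * p) := by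
          rw [Real.mul_rpow (by positivity) (by positivity), ← Real.rpow_natCast (1 + ‖y‖),
            ← Real.rpow_mul (by positivity)]
          norm_num
      _ ≤ 2 ^ p * (1 + ‖y‖) ^ ⌈2 * p⌉₊ := by
          rw [← Real.rpow_natCast (1 + ‖y‖)]
          gcongr
          exact Nat.le_ceil _
  have hint := (LaplaceDensity.mul_of_norm_le_pow (Ω := lorentzCone) isOpen_lorentzCone hone
    (Complex.continuous_ofReal.comp (continuous_DeltaL.abs.rpow_const fun _ => .inr hp))
    hle).integrable_expWeight_smul isOpen_lorentzCone (lorentzCone.smul_mem two_pos lorentzUnit_mem)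
  refine lt_of_le_of_lt ?_ hint.hasFiniteIntegral
  refine (setLIntegral_mono' isOpen_lorentzCone.measurableSet fun y hy => ?_).trans
    (setLIntegral_le_lintegral Lambda3 _)
  beta_reduce
  rw [indicator_of_mem (Lambda3_subset_dualCone hy), ← ENNReal.ofReal_mul (expWeight_pos _ _).le,
    ← ofReal_norm, norm_smul, Function.comp_apply, Pi.one_apply, mul_one, Complex.norm_real,
    Real.norm_of_nonneg (expWeight_pos _ _).le, Real.norm_of_nonneg (by positivity),
    abs_of_pos (DeltaL_pos hy)]
  refine ENNReal.ofReal_le_ofReal (le_of_eq ?_)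
  rw [expWeight, expWeight, smul_dotProduct, smul_dotProduct, dotProduct_comm]

lemma LaplaceDensity.bergNormSqTube_laplace {ν : ℝ} {g : (Fin 3 → ℝ) → ℂ}
    (hg : LaplaceDensity Lambda3 g) :
    bergNormSqTube ν (laplace g) = gammaIntegral (ν - 3 / 2) lorentzUnit *
      ∫⁻ ξ in Lambda3, ‖g ξ‖ₑ ^ 2 * ENNReal.ofReal (DeltaL ξ ^ (-ν)) := by
  have hg' : AEMeasurable (fun ξ => ‖g ξ‖ₑ ^ 2) volume :=
    (LaplaceDensity.aestronglyMeasurable (Ω := lorentzCone) hg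
      ⟨_, lorentzUnit_mem⟩).enorm.pow_const 2
  have hslice : ∀ y ∈ Lambda3, sliceNormSq (laplace g) y =
      ∫⁻ ξ in Lambda3, ENNReal.ofReal (expWeight ((2 : ℝ) • y) ξ) * ‖g ξ‖ₑ ^ 2 := fun y hy => by
    rw [LaplaceDensity.sliceNormSq_laplace (Ω := lorentzCone) isOpen_lorentzCone hg hy,
      ← Measure.restrict_congr_set dualCone_ae_eq_Lambda3,
      ← lintegral_indicator (isClosed_dualCone Lambda3).measurableSet]
    refine lintegral_congr fun ξ => ?_
    by_cases hξ : ξ ∈ dualCone Lambda3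
    · rw [indicator_of_mem hξ]
    · simp [indicator_of_notMem hξ, hg.eq_zero ξ hξ]
  calc bergNormSqTube ν (laplace g)
      = ∫⁻ y in Lambda3, ∫⁻ ξ in Lambda3, ‖g ξ‖ₑ ^ 2 *
          (ENNReal.ofReal (expWeight ((2 : ℝ) • y) ξ) *
            ENNReal.ofReal (DeltaL y ^ (ν - 3 / 2))) := by
        refine setLIntegral_congr_fun isOpen_lorentzCone.measurableSet fun y hy => ?_
        change sliceNormSq (laplace g) y * _ = _
        rw [hslice y hy, ← lintegral_mul_const' _ _ ENNReal.ofReal_ne_top]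
        exact lintegral_congr fun ξ => by ring
    _ = ∫⁻ ξ in Lambda3, ‖g ξ‖ₑ ^ 2 * gammaIntegral (ν - 3 / 2) ξ := by
        rw [lintegral_lintegral_swap (hg'.restrict.comp_snd.mul
          (measurable_gammaIntegrand _).aemeasurable)]
        exact lintegral_congr fun ξ => lintegral_const_mul' _ _ (by finiteness)
    _ = ∫⁻ ξ in Lambda3, gammaIntegral (ν - 3 / 2) lorentzUnit *
          (‖g ξ‖ₑ ^ 2 * ENNReal.ofReal (DeltaL ξ ^ (-ν))) := by
        refine setLIntegral_congr_fun isOpen_lorentzCone.measurableSet fun ξ hξ => ?_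
        rw [gammaIntegral_eq _ hξ, sub_add_cancel]
        ring
    _ = _ := lintegral_const_mul'' _ (hg'.restrict.mul (by unfold DeltaL; fun_prop))

end GammaIntegral

section SubMean

lemma ofReal_mul_enorm_le_lintegral_circleMap {g : ℂ → ℂ}
    (hg : DiffContOnCl ℂ g (Metric.ball 0 1)) :
    ENNReal.ofReal (2 * Real.pi) * ‖g 0‖ₑ ≤
      ∫⁻ θ in Ioc 0 (2 * Real.pi), ‖g (circleMap 0 1 θ)‖ₑ := by
  have hpi : (0 : ℝ) < 2 * Real.pi := Real.two_pi_pos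
  have hmean := (by rwa [abs_one] : DiffContOnCl ℂ g (Metric.ball 0 |1|)).circleAverage
  rw [Real.circleAverage_def, intervalIntegral.integral_of_le hpi.le,
    inv_smul_eq_iff₀ hpi.ne'] at hmean
  rw [← Real.enorm_of_nonneg hpi.le, ← enorm_smul, ← hmean]
  exact enorm_integral_le_lintegral_enorm _

variable {ι : Type*} [Fintype ι]

lemma measurePreserving_circleMap_smul (θ : ℝ) :
    MeasurePreserving fun w : ι → ℂ => circleMap 0 1 θ • w := by
  have hrot : MeasurePreserving fun w : ℂ => circleMap 0 1 θ * w := by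
    have hcircle : (fun w : ℂ => circleMap 0 1 θ * w) = rotation (Circle.exp θ) := by
      ext w; simp [circleMap]
    exact hcircle ▸ (rotation (Circle.exp θ)).measurePreserving
  exact volume_preserving_pi fun _ => hrot

lemma setLIntegral_add_circleMap_smul (φ : (ι → ℂ) → ℝ≥0∞) (z : ι → ℂ) (R θ : ℝ) :
    ∫⁻ w in Metric.ball 0 R, φ (z + circleMap 0 1 θ • w) = ∫⁻ w in Metric.ball z R, φ w := by
  have hmp : MeasurePreserving fun w : ι → ℂ => z + circleMap 0 1 θ • w :=
    (measurePreserving_add_left volume z).comp (measurePreserving_circleMap_smul θ)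
  have hemb : MeasurableEmbedding fun w : ι → ℂ => z + circleMap 0 1 θ • w :=
    (measurableEmbedding_addLeft z).comp
      (measurableEmbedding_const_smul₀ (circleMap_ne_center one_ne_zero))
  have hpre : (fun w => z + circleMap 0 1 θ • w) ⁻¹' Metric.ball z R = Metric.ball 0 R := by
    ext w; simp [norm_smul]
  rw [← hpre]
  exact hmp.setLIntegral_comp_preimage_emb hemb φ _

lemma volume_ball_mul_enorm_le {H : (ι → ℂ) → ℂ} {z : ι → ℂ} {R : ℝ}
    (hH : DifferentiableOn ℂ H (Metric.ball z R)) :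
    volume (Metric.ball (0 : ι → ℂ) R) * ‖H z‖ₑ ≤ ∫⁻ w in Metric.ball z R, ‖H w‖ₑ := by
  have hmem {w : ι → ℂ} (hw : w ∈ Metric.ball 0 R) {ζ : ℂ} (hζ : ‖ζ‖ ≤ 1) :
      z + ζ • w ∈ Metric.ball z R := by
    rw [mem_ball_iff_norm, add_sub_cancel_left, norm_smul]
    exact (mul_le_of_le_one_left (norm_nonneg w) hζ).trans_lt (mem_ball_zero_iff.1 hw)
  have hcircle : ∀ w ∈ Metric.ball (0 : ι → ℂ) R, ENNReal.ofReal (2 * Real.pi) * ‖H z‖ₑ ≤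
      ∫⁻ θ in Ioc 0 (2 * Real.pi), ‖H (z + circleMap 0 1 θ • w)‖ₑ := fun w hw => by
    have hdiff : DifferentiableOn ℂ (fun ζ : ℂ => H (z + ζ • w)) (Metric.closedBall 0 1) :=
      hH.comp (by fun_prop) fun ζ hζ => hmem hw (mem_closedBall_zero_iff.1 hζ)
    rw [← closure_ball _ one_ne_zero] at hdiff
    simpa using ofReal_mul_enorm_le_lintegral_circleMap hdiff.diffContOnCl
  have hcont : ContinuousOn (fun p : (ι → ℂ) × ℝ => H (z + circleMap 0 1 p.2 • p.1))
      (Metric.ball 0 R ×ˢ Ioc 0 (2 * Real.pi)) :=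
    hH.continuousOn.comp (by unfold circleMap; fun_prop) fun p hp => hmem hp.1 (by simp)
  have hmeas := (hcont.aemeasurable (μ := volume)
    (measurableSet_ball.prod measurableSet_Ioc)).enorm
  have hint := setLIntegral_mono' (μ := volume) measurableSet_ball hcircle
  rw [lintegral_lintegral_swap (by rwa [Measure.prod_restrict])] at hint
  simp only [setLIntegral_add_circleMap_smul fun w => ‖H w‖ₑ, setLIntegral_const, Real.volume_Ioc,
    sub_zero] at hint
  rwa [mul_right_comm, mul_assoc, mul_comm, ENNReal.mul_le_mul_iff_left
    (ENNReal.ofReal_pos.2 Real.two_pi_pos).ne' ENNReal.ofReal_ne_top] at hint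

lemma measurePreserving_tubePoint :
    MeasurePreserving fun p : (ι → ℝ) × (ι → ℝ) => tubePoint p.1 p.2 := by
  have hpi : MeasurePreserving
      fun (f : ι → ℝ × ℝ) (i : ι) => Complex.measurableEquivRealProd.symm (f i) :=
    volume_preserving_pi fun _ => Complex.volume_preserving_equiv_real_prod.symm
  convert hpi.comp (volume_measurePreserving_arrowProdEquivProdArrow ℝ ℝ ι).symm using 1
  ext p i
  exact (Complex.mk_eq_add_mul_I _ _).symm

lemma setLIntegral_tube {s : Set (ι → ℝ)} (hs : MeasurableSet s) {φ : (ι → ℂ) → ℝ≥0∞}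
    (hφ : AEMeasurable φ (volume.restrict (tube s))) :
    ∫⁻ z in tube s, φ z = ∫⁻ y in s, ∫⁻ x, φ (tubePoint x y) := by
  have hpre : (fun p : (ι → ℝ) × (ι → ℝ) => tubePoint p.1 p.2) ⁻¹' tube s = univ ×ˢ s := by
    ext p; simp [tubePoint_mem_tube]
  have hmp : MeasurePreserving (fun p : (ι → ℝ) × (ι → ℝ) => tubePoint p.1 p.2)
      (volume.restrict (univ ×ˢ s)) (volume.restrict (tube s)) :=
    hpre ▸ measurePreserving_tubePoint.restrict_preimage (continuous_imPart.measurable hs)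
  rw [← hmp.map_eq, lintegral_map' (by rwa [hmp.map_eq]) hmp.measurable.aemeasurable]
  have hcomp := hφ.comp_quasiMeasurePreserving hmp.quasiMeasurePreserving
  refine (setLIntegral_prod_symm _ hcomp).trans ?_
  simp only [Measure.restrict_univ]
  rfl

lemma volume_ball_mul_enorm_sq_le {F : (ι → ℂ) → ℂ} {y : ι → ℝ} {r : ℝ}
    (hF : DifferentiableOn ℂ F (tube (Metric.ball y r))) (x : ι → ℝ) :
    volume (Metric.ball (0 : ι → ℂ) r) * ‖F (tubePoint x y)‖ₑ ^ 2 ≤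
      ∫⁻ η in Metric.ball y r, sliceNormSq F η := by
  have hball : Metric.ball (tubePoint x y) r ⊆ tube (Metric.ball y r) := fun w hw => by
    have him := norm_imPart_le (w - tubePoint x y)
    rw [mem_tube, mem_ball_iff_norm]
    refine lt_of_le_of_lt (le_of_eq_of_le ?_ him) (mem_ball_iff_norm.1 hw)
    congr 1
    ext i; simp [imPart, tubePoint]
  have hmeas : MeasurableSet (tube (Metric.ball y r)) :=
    (isOpen_tube Metric.isOpen_ball).measurableSet
  calc volume (Metric.ball (0 : ι → ℂ) r) * ‖F (tubePoint x y)‖ₑ ^ 2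
      ≤ ∫⁻ w in Metric.ball (tubePoint x y) r, ‖F w ^ 2‖ₑ := by
        rw [← enorm_pow]
        exact volume_ball_mul_enorm_le ((hF.mono hball).pow 2)
    _ ≤ ∫⁻ w in tube (Metric.ball y r), ‖F w‖ₑ ^ 2 := by
        simp only [enorm_pow]
        exact lintegral_mono_set hball
    _ = ∫⁻ η in Metric.ball y r, sliceNormSq F η :=
        setLIntegral_tube measurableSet_ball
          ((hF.continuousOn.aemeasurable hmeas).enorm.pow_const 2)

end SubMean

section SliceBounded

variable {ι : Type*} [Fintype ι] {Ω : ConvexCone ℝ (ι → ℝ)} {F : (ι → ℂ) → ℂ}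

/-- The slice norms of `F` are integrable over a ball around each point of `Ω`, uniformly under
translation of the ball by `Ω`. This is what Hardy and Bergman functions have in common. -/
def SliceBounded (Ω : Set (ι → ℝ)) (F : (ι → ℂ) → ℂ) : Prop :=
  ∀ v ∈ Ω, ∃ r > 0, ∃ K < ∞, ∀ y ∈ Ω, Metric.ball (y + v) r ⊆ Ω ∧
    ∫⁻ η in Metric.ball (y + v) r, sliceNormSq F η ≤ K

lemma SliceBounded.exists_norm_le {Ω : Set (ι → ℝ)} (hF : DifferentiableOn ℂ F (tube Ω))
    (hb : SliceBounded Ω F) {v : ι → ℝ} (hv : v ∈ Ω) :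
    ∃ M, ∀ y ∈ Ω, ∀ x, ‖F (tubePoint x (y + v))‖ ≤ M := by
  obtain ⟨r, hr, K, hK, hball⟩ := hb v hv
  have hvol : volume (Metric.ball (0 : ι → ℂ) r) ≠ 0 := (Metric.measure_ball_pos _ _ hr).ne'
  have hquot : K / volume (Metric.ball (0 : ι → ℂ) r) ≠ ∞ := (ENNReal.div_lt_top hK.ne hvol).ne
  refine ⟨√(K / volume (Metric.ball (0 : ι → ℂ) r)).toReal, fun y hy x => Real.le_sqrt_of_sq_le ?_⟩
  obtain ⟨hsub, hle⟩ := hball y hy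
  have h := (volume_ball_mul_enorm_sq_le (hF.mono (preimage_mono hsub)) x).trans hle
  rw [mul_comm, ← ENNReal.le_div_iff_mul_le (.inl hvol) (.inl measure_ball_lt_top.ne)] at h
  simpa using ENNReal.toReal_mono hquot h

lemma exists_eq_add_of_mem_ball_add {S : Set (ι → ℝ)} {v : ι → ℝ} {r : ℝ}
    (h : Metric.ball v r ⊆ S) (y : ι → ℝ) {η : ι → ℝ} (hη : η ∈ Metric.ball (y + v) r) :
    ∃ w ∈ S, η = y + w :=
  ⟨η - y, h (by rwa [mem_ball_iff_norm, sub_sub, ← mem_ball_iff_norm]), by abel⟩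

lemma sliceNormSq_le_hardyNormSqOn {Ω : Set (ι → ℝ)} {y : ι → ℝ} (hy : y ∈ Ω) :
    sliceNormSq F y ≤ hardyNormSqOn Ω F :=
  le_iSup₂ (f := fun y _ => sliceNormSq F y) y hy

lemma sliceBounded_of_hardyNormSqOn_lt_top (hΩ : IsOpen (Ω : Set (ι → ℝ)))
    (hF : hardyNormSqOn Ω F < ∞) : SliceBounded Ω F := by
  intro v hv
  obtain ⟨r, hr, hball⟩ := Metric.isOpen_iff.1 hΩ v hv
  refine ⟨r, hr, _, ENNReal.mul_lt_top hF (measure_ball_lt_top (μ := volume) (x := v) (r := r)),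
    fun y hy => ?_⟩
  have hsub : Metric.ball (y + v) r ⊆ Ω := fun η hη => by
    obtain ⟨w, hw, rfl⟩ := exists_eq_add_of_mem_ball_add hball y hη
    exact Ω.add_mem hy hw
  refine ⟨hsub, ?_⟩
  calc ∫⁻ η in Metric.ball (y + v) r, sliceNormSq F η
      ≤ ∫⁻ _ in Metric.ball (y + v) r, hardyNormSqOn Ω F :=
        setLIntegral_mono' measurableSet_ball fun η hη => sliceNormSq_le_hardyNormSqOn (hsub hη)
    _ = hardyNormSqOn Ω F * volume (Metric.ball v r) := by
        rw [setLIntegral_const, Measure.addHaar_ball_center, Measure.addHaar_ball_center _ v]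

lemma sliceBounded_of_bergNormSqTube_lt_top {ν : ℝ} (hν : 3 / 2 ≤ ν) {G : (Fin 3 → ℂ) → ℂ}
    (hG : bergNormSqTube ν G < ∞) : SliceBounded Lambda3 G := by
  intro v hv
  have hc : 0 < DeltaL v / 2 := half_pos (DeltaL_pos hv)
  have hopen : IsOpen (Lambda3 ∩ {y | DeltaL v / 2 < DeltaL y}) :=
    isOpen_lorentzCone.inter (isOpen_lt continuous_const continuous_DeltaL)
  obtain ⟨r, hr, hball⟩ := Metric.isOpen_iff.1 hopen v ⟨hv, half_lt_self (DeltaL_pos hv)⟩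
  have hw0 : ENNReal.ofReal ((DeltaL v / 2) ^ (ν - 3 / 2)) ≠ 0 :=
    (ENNReal.ofReal_pos.2 (Real.rpow_pos_of_pos hc _)).ne'
  refine ⟨r, hr, _, ENNReal.div_lt_top hG.ne hw0, fun y hy => ?_⟩
  have hsub : ∀ η ∈ Metric.ball (y + v) r, η ∈ Lambda3 ∧ DeltaL v / 2 ≤ DeltaL η := fun η hη => by
    obtain ⟨w, ⟨hw, hwv : DeltaL v / 2 < DeltaL w⟩, rfl⟩ := exists_eq_add_of_mem_ball_add hball y hη
    exact ⟨lorentzCone.add_mem hy hw, by linarith [DeltaL_add_le hy hw, DeltaL_pos hy]⟩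
  refine ⟨fun η hη => (hsub η hη).1, ?_⟩
  rw [ENNReal.le_div_iff_mul_le (.inl hw0) (.inl ENNReal.ofReal_ne_top),
    ← lintegral_mul_const' _ _ ENNReal.ofReal_ne_top]
  calc ∫⁻ η in Metric.ball (y + v) r,
        sliceNormSq G η * ENNReal.ofReal ((DeltaL v / 2) ^ (ν - 3 / 2))
      ≤ ∫⁻ η in Metric.ball (y + v) r,
          sliceNormSq G η * ENNReal.ofReal (DeltaL η ^ (ν - 3 / 2)) := by
        refine setLIntegral_mono' measurableSet_ball fun η hη => ?_
        gcongr
        exact (hsub η hη).2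
    _ ≤ bergNormSqTube ν G := lintegral_mono_set fun η hη => (hsub η hη).1

end SliceBounded

lemma tendstoLocallyUniformlyOn_nhdsWithin {α β γ : Type*} [TopologicalSpace α]
    [TopologicalSpace β] [LocallyCompactSpace β] [UniformSpace γ] {f : α → β → γ} {s : Set α}
    {U : Set β} {a : α} (hU : IsOpen U) (hf : ContinuousOn f.uncurry (s ×ˢ U)) (ha : a ∈ s) :
    TendstoLocallyUniformlyOn f (f a) (𝓝[s] a) U := by
  rw [tendstoLocallyUniformlyOn_iff_forall_isCompact hU]
  intro k hkU hk u hu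
  obtain ⟨v, hv, h⟩ :=
    hk.mem_uniformity_of_prod (hf.mono (prod_mono_right hkU)) ha (symm_le_uniformity hu)
  filter_upwards [hv] with p hp x hx using h p hp x hx

section Damping

variable {ι κ : Type*} [Fintype ι] [Fintype κ] {Ω : Set (ι → ℝ)} {w : κ → ι → ℝ} {ε : ℝ}
  {z : ι → ℂ}

lemma one_le_norm_one_sub_I_mul {ζ : ℂ} (hζ : 0 ≤ ζ.im) : 1 ≤ ‖1 - Complex.I * ζ‖ := by
  have h := Complex.re_le_norm (1 - Complex.I * ζ)
  simp only [Complex.sub_re, Complex.one_re, Complex.I_mul_re] at h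
  linarith

lemma abs_re_le_norm_one_sub_I_mul (ζ : ℂ) : |ζ.re| ≤ ‖1 - Complex.I * ζ‖ := by
  simpa using Complex.abs_im_le_norm (1 - Complex.I * ζ)

/-- The product of the linear factors `1 - iε z·wₖ`, which grows in the directions of the `wₖ` but
is at least `1` in modulus on the tube over a set whose dual cone contains all the `wₖ`. -/
def damping (w : κ → ι → ℝ) (ε : ℝ) (z : ι → ℂ) : ℂ :=
  ∏ k, (1 - Complex.I * (ε * pairing z (w k)))

lemma continuous_damping (w : κ → ι → ℝ) :
    Continuous fun p : ℝ × (ι → ℂ) => damping w p.1 p.2 := by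
  unfold damping pairing; fun_prop

lemma differentiable_damping (w : κ → ι → ℝ) (ε : ℝ) : Differentiable ℂ (damping w ε) := by
  unfold damping pairing; fun_prop

lemma damping_zero (w : κ → ι → ℝ) (z : ι → ℂ) : damping w 0 z = 1 := by
  simp [damping]

lemma one_le_norm_damping_factor {ξ : ι → ℝ} (hξ : ξ ∈ dualCone Ω) (hε : 0 ≤ ε) (hz : z ∈ tube Ω) :
    1 ≤ ‖1 - Complex.I * (ε * pairing z ξ)‖ :=
  one_le_norm_one_sub_I_mul <| by simpa using mul_nonneg hε (hξ _ hz)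

lemma one_le_norm_damping (hw : ∀ k, w k ∈ dualCone Ω) (hε : 0 ≤ ε) (hz : z ∈ tube Ω) :
    1 ≤ ‖damping w ε z‖ := by
  rw [damping, norm_prod]
  exact Finset.one_le_prod fun k _ => one_le_norm_damping_factor (hw k) hε hz

lemma damping_ne_zero (hw : ∀ k, w k ∈ dualCone Ω) (hε : 0 ≤ ε) (hz : z ∈ tube Ω) :
    damping w ε z ≠ 0 :=
  norm_pos_iff.1 (one_pos.trans_le (one_le_norm_damping hw hε hz))

lemma mul_abs_dotProduct_le_norm_damping (hw : ∀ k, w k ∈ dualCone Ω) (hε : 0 ≤ ε)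
    (hz : z ∈ tube Ω) (k : κ) : ε * |rePart z ⬝ᵥ w k| ≤ ‖damping w ε z‖ := by
  calc ε * |rePart z ⬝ᵥ w k| = |(ε * pairing z (w k)).re| := by simp [abs_mul, abs_of_nonneg hε]
    _ ≤ ‖1 - Complex.I * (ε * pairing z (w k))‖ := abs_re_le_norm_one_sub_I_mul _
    _ ≤ ‖damping w ε z‖ := by
      rw [damping, norm_prod,
        ← Finset.prod_singleton (fun k => ‖1 - Complex.I * (ε * pairing z (w k))‖) k]
      exact Finset.prod_le_prod_of_subset_of_one_le (Finset.subset_univ _)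
        (fun _ _ => norm_nonneg _) fun k _ _ => one_le_norm_damping_factor (hw k) hε hz

lemma one_add_norm_rePart_le_mul_norm_damping {C : ℝ} (hC : 0 ≤ C)
    (hspan : ∀ x, ‖x‖ ≤ C * ∑ k, |x ⬝ᵥ w k|) (hw : ∀ k, w k ∈ dualCone Ω) (hε : 0 < ε)
    (hz : z ∈ tube Ω) :
    1 + ‖rePart z‖ ≤ (1 + C * (Fintype.card κ * ε⁻¹)) * ‖damping w ε z‖ := by
  have hsum : ∑ k, |rePart z ⬝ᵥ w k| ≤ Fintype.card κ * ε⁻¹ * ‖damping w ε z‖ := by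
    rw [mul_assoc, ← nsmul_eq_mul]
    refine Finset.sum_le_card_nsmul _ _ _ fun k _ => ?_
    rw [le_inv_mul_iff₀ hε]
    exact mul_abs_dotProduct_le_norm_damping hw hε.le hz k
  rw [add_mul, one_mul, mul_assoc C]
  exact add_le_add (one_le_norm_damping hw hε.le hz)
    ((hspan _).trans (mul_le_mul_of_nonneg_left hsum hC))

end Damping

section Regularize

variable {ι κ : Type*} [Fintype ι] [Fintype κ] {Ω : ConvexCone ℝ (ι → ℝ)} {w : κ → ι → ℝ}
  {v : ι → ℝ} {ε : ℝ} {F : (ι → ℂ) → ℂ}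

/-- The translate of `F` by `iεv`, divided by a power of `damping w ε`: for `ε > 0` this turns a
Hardy or Bergman function into a rapidly decaying one, and it tends to `F` as `ε → 0`. -/
def regularize (w : κ → ι → ℝ) (v : ι → ℝ) (ε : ℝ) (F : (ι → ℂ) → ℂ) (z : ι → ℂ) : ℂ :=
  F (z + tubePoint 0 (ε • v)) * (damping w ε z)⁻¹ ^ (Fintype.card ι + 1)

lemma regularize_tubePoint (w : κ → ι → ℝ) (v : ι → ℝ) (ε : ℝ) (F : (ι → ℂ) → ℂ) (x y : ι → ℝ) :
    regularize w v ε F (tubePoint x y) =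
      F (tubePoint x (y + ε • v)) * (damping w ε (tubePoint x y))⁻¹ ^ (Fintype.card ι + 1) := by
  rw [regularize, tubePoint_add]

lemma regularize_zero (w : κ → ι → ℝ) (v : ι → ℝ) (F : (ι → ℂ) → ℂ) :
    regularize w v 0 F = F := by
  ext z
  have h0 : tubePoint (0 : ι → ℝ) 0 = 0 := by ext i; simp [tubePoint]
  simp [regularize, damping_zero, h0]

omit [Fintype ι] in
lemma add_smul_mem {y : ι → ℝ} (hy : y ∈ Ω) (hv : v ∈ Ω) (hε : 0 ≤ ε) : y + ε • v ∈ Ω := by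
  rcases hε.eq_or_lt with rfl | hε
  · simpa using hy
  · exact Ω.add_mem hy (Ω.smul_mem hε hv)

omit [Fintype ι] in
lemma add_tubePoint_smul_mem_tube {z : ι → ℂ} (hz : z ∈ tube Ω) (hv : v ∈ Ω) (hε : 0 ≤ ε) :
    z + tubePoint 0 (ε • v) ∈ tube Ω := by
  rw [mem_tube, imPart_add_tubePoint_zero]
  exact add_smul_mem hz hv hε

lemma differentiableOn_regularize (hw : ∀ k, w k ∈ dualCone Ω) (hv : v ∈ Ω)
    (hF : DifferentiableOn ℂ F (tube Ω)) (hε : 0 ≤ ε) :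
    DifferentiableOn ℂ (regularize w v ε F) (tube Ω) :=
  (hF.comp (by fun_prop) fun _ hz => add_tubePoint_smul_mem_tube hz hv hε).mul <|
    ((differentiable_damping w ε).differentiableOn.inv fun _ hz => damping_ne_zero hw hε hz).pow _

lemma continuousOn_regularize (hw : ∀ k, w k ∈ dualCone Ω) (hv : v ∈ Ω)
    (hF : ContinuousOn F (tube Ω)) :
    ContinuousOn (fun p : ℝ × (ι → ℂ) => regularize w v p.1 F p.2) (Ici 0 ×ˢ tube Ω) := by
  refine ContinuousOn.mul (hF.comp ?_ fun p hp => add_tubePoint_smul_mem_tube hp.2 hv hp.1)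
    (((continuous_damping w).continuousOn.inv₀ fun p hp => damping_ne_zero hw hp.1 hp.2).pow _)
  unfold tubePoint
  simp only [Pi.smul_apply]
  fun_prop

lemma tendstoLocallyUniformlyOn_regularize (hΩ : IsOpen (Ω : Set (ι → ℝ)))
    (hw : ∀ k, w k ∈ dualCone Ω) (hv : v ∈ Ω) (hF : ContinuousOn F (tube Ω)) :
    TendstoLocallyUniformlyOn (fun ε => regularize w v ε F) F (𝓝[≥] 0) (tube Ω) := by
  have h := tendstoLocallyUniformlyOn_nhdsWithin (f := fun ε => regularize w v ε F)
    (isOpen_tube hΩ) (continuousOn_regularize hw hv hF) self_mem_Ici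
  rwa [regularize_zero] at h

lemma norm_regularize_le (hw : ∀ k, w k ∈ dualCone Ω) (hε : 0 ≤ ε) {x y : ι → ℝ} (hy : y ∈ Ω) :
    ‖regularize w v ε F (tubePoint x y)‖ ≤ ‖F (tubePoint x (y + ε • v))‖ := by
  rw [regularize_tubePoint, norm_mul, norm_pow, norm_inv]
  exact mul_le_of_le_one_right (norm_nonneg _) <| pow_le_one₀ (by positivity) <|
    inv_le_one_of_one_le₀ (one_le_norm_damping hw hε (tubePoint_mem_tube.2 hy))

lemma rapidlyDecaying_regularize {C : ℝ} (hC : 0 ≤ C) (hspan : ∀ x, ‖x‖ ≤ C * ∑ k, |x ⬝ᵥ w k|)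
    (hw : ∀ k, w k ∈ dualCone Ω) (hv : v ∈ Ω) (hF : DifferentiableOn ℂ F (tube Ω))
    (hb : SliceBounded Ω F) (hε : 0 < ε) : RapidlyDecaying Ω (regularize w v ε F) := by
  obtain ⟨M, hM⟩ := hb.exists_norm_le hF (Ω.smul_mem hε hv)
  set B : ℝ := 1 + C * (Fintype.card κ * ε⁻¹)
  have hB0 : 0 < B := by positivity
  refine ⟨M * B ^ (Fintype.card ι + 1), fun y hy x => ?_⟩
  have hgrow := one_add_norm_rePart_le_mul_norm_damping hC hspan hw hε
    (tubePoint_mem_tube.2 hy : tubePoint x y ∈ tube Ω)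
  rw [rePart_tubePoint] at hgrow
  have hinv : ‖damping w ε (tubePoint x y)‖⁻¹ ≤ B * (1 + ‖x‖)⁻¹ := by
    rw [← div_eq_mul_inv, inv_le_comm₀ _ (by positivity), inv_div, div_le_iff₀' hB0]
    · exact hgrow
    · exact norm_pos_iff.2 (damping_ne_zero hw hε.le (tubePoint_mem_tube.2 hy))
  rw [regularize_tubePoint, norm_mul, norm_pow, norm_inv, decay, ← inv_pow, mul_assoc, ← mul_pow]
  exact mul_le_mul (hM y hy x) (pow_le_pow_left₀ (by positivity) hinv _) (by positivity)
    ((norm_nonneg _).trans (hM y hy x))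

lemma sliceNormSq_regularize_le (hw : ∀ k, w k ∈ dualCone Ω) (hε : 0 ≤ ε) {y : ι → ℝ}
    (hy : y ∈ Ω) : sliceNormSq (regularize w v ε F) y ≤ sliceNormSq F (y + ε • v) := by
  refine lintegral_mono fun x => ?_
  gcongr
  exact enorm_le_iff_norm_le.2 (norm_regularize_le hw hε hy)

lemma hardyNormSqOn_regularize_le (hw : ∀ k, w k ∈ dualCone Ω) (hv : v ∈ Ω) (hε : 0 ≤ ε) :
    hardyNormSqOn Ω (regularize w v ε F) ≤ hardyNormSqOn Ω F :=
  iSup₂_le fun _ hy => (sliceNormSq_regularize_le hw hε hy).trans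
    (sliceNormSq_le_hardyNormSqOn (add_smul_mem hy hv hε))

end Regularize

lemma bergNormSqTube_regularize_le {κ : Type*} [Fintype κ] {w : κ → Fin 3 → ℝ} {v : Fin 3 → ℝ}
    {ε ν : ℝ} {G : (Fin 3 → ℂ) → ℂ} (hw : ∀ k, w k ∈ dualCone Lambda3) (hv : v ∈ Lambda3)
    (hε : 0 < ε) (hν : 3 / 2 ≤ ν) :
    bergNormSqTube ν (regularize w v ε G) ≤ bergNormSqTube ν G := by
  have hmeas : MeasurableSet Lambda3 := isOpen_lorentzCone.measurableSet
  have hεv : ε • v ∈ Lambda3 := lorentzCone.smul_mem hε hv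
  set φ : (Fin 3 → ℝ) → ℝ≥0∞ := fun y => sliceNormSq G y * ENNReal.ofReal (DeltaL y ^ (ν - 3 / 2))
  calc bergNormSqTube ν (regularize w v ε G) ≤ ∫⁻ y in Lambda3, φ (y + ε • v) := by
        refine setLIntegral_mono' hmeas fun y hy => mul_le_mul'
          (sliceNormSq_regularize_le (Ω := lorentzCone) hw hε.le hy) (ENNReal.ofReal_le_ofReal ?_)
        refine Real.rpow_le_rpow (DeltaL_pos hy).le ?_ (by linarith)
        linarith [DeltaL_add_le hy hεv, DeltaL_pos hεv]
    _ ≤ ∫⁻ y, Lambda3.indicator φ (y + ε • v) := by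
        rw [← lintegral_indicator hmeas]
        exact lintegral_mono <| indicator_le fun y hy =>
          (indicator_of_mem (lorentzCone.add_mem hy hεv) φ).ge
    _ = bergNormSqTube ν G := by
        rw [lintegral_add_right_eq_self (μ := volume) (Lambda3.indicator φ),
          lintegral_indicator hmeas]
        rfl

section LorentzRegularize

/-- Three vectors of the Lorentz cone spanning `ℝ³`. -/
def lorentzFrame : Fin 3 → Fin 3 → ℝ := ![![1, 0, 0], ![2, 1, 0], ![2, 0, 1]]

lemma lorentzFrame_mem_dualCone (k : Fin 3) : lorentzFrame k ∈ dualCone Lambda3 := by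
  refine Lambda3_subset_dualCone (mem_Lambda3_iff.2 ?_)
  fin_cases k <;> simp [lorentzFrame]

lemma norm_le_sum_abs_dotProduct_lorentzFrame (x : Fin 3 → ℝ) :
    ‖x‖ ≤ 2 * ∑ k, |x ⬝ᵥ lorentzFrame k| := by
  have hsum : ∑ k, |x ⬝ᵥ lorentzFrame k| = |x 0| + |2 * x 0 + x 1| + |2 * x 0 + x 2| := by
    simp [Fin.sum_univ_three, dotProduct, lorentzFrame, mul_comm]
  rw [hsum]
  have h₁ : |x 1| ≤ |2 * x 0 + x 1| + 2 * |x 0| := by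
    simpa [abs_mul] using abs_sub (2 * x 0 + x 1) (2 * x 0)
  have h₂ : |x 2| ≤ |2 * x 0 + x 2| + 2 * |x 0| := by
    simpa [abs_mul] using abs_sub (2 * x 0 + x 2) (2 * x 0)
  refine (pi_norm_le_iff_of_nonneg (by positivity)).2 (Fin.forall_fin_succ.2 ?_)
  simp only [Real.norm_eq_abs, Fin.forall_fin_two]
  have h₃ := abs_nonneg (x 0)
  have h₄ := abs_nonneg (2 * x 0 + x 1)
  have h₅ := abs_nonneg (2 * x 0 + x 2)
  exact ⟨by linarith, by simp; linarith, by simp; linarith⟩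

variable {F : (Fin 3 → ℂ) → ℂ}

lemma exists_rapidlyDecaying_tendstoLocallyUniformlyOn (hF : DifferentiableOn ℂ F TLambda3)
    (hb : SliceBounded Lambda3 F) :
    ∃ Fn : ℕ → (Fin 3 → ℂ) → ℂ, TendstoLocallyUniformlyOn Fn F atTop TLambda3 ∧ ∀ n,
      DifferentiableOn ℂ (Fn n) TLambda3 ∧ RapidlyDecaying Lambda3 (Fn n) ∧
      hardyNormSq (Fn n) ≤ hardyNormSq F ∧
      ∀ ν : ℝ, 3 / 2 ≤ ν → bergNormSqTube ν (Fn n) ≤ bergNormSqTube ν F := by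
  have hε : ∀ n : ℕ, (0 : ℝ) < 1 / (n + 1) := fun n => Nat.one_div_pos_of_nat
  have hlim : Tendsto (fun n : ℕ => 1 / ((n : ℝ) + 1)) atTop (𝓝[≥] 0) :=
    tendsto_nhdsWithin_iff.2
      ⟨tendsto_one_div_add_atTop_nhds_zero_nat, .of_forall fun n => (hε n).le⟩
  have hw := lorentzFrame_mem_dualCone
  refine ⟨fun n => regularize lorentzFrame lorentzUnit (1 / (n + 1)) F, fun u hu z hz => ?_,
    fun n => ⟨?_, ?_, ?_, fun ν hν => ?_⟩⟩
  · obtain ⟨t, ht, h⟩ := tendstoLocallyUniformlyOn_regularize isOpen_lorentzCone hw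
      lorentzUnit_mem hF.continuousOn u hu z hz
    exact ⟨t, ht, hlim.eventually h⟩
  · exact differentiableOn_regularize (Ω := lorentzCone) hw lorentzUnit_mem hF (hε n).le
  · exact rapidlyDecaying_regularize (Ω := lorentzCone) zero_le_two
      norm_le_sum_abs_dotProduct_lorentzFrame hw lorentzUnit_mem hF hb (hε n)
  · exact hardyNormSqOn_regularize_le (Ω := lorentzCone) hw lorentzUnit_mem (hε n).le
  · exact bergNormSqTube_regularize_le hw lorentzUnit_mem (hε n) hν

end LorentzRegularize

section BoxIsometry

variable {m : ℕ} {f : (Fin 3 → ℝ) → ℂ} {F G : (Fin 3 → ℂ) → ℂ}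

/-- The ratio of the squared norms of `□ᵐF` in `A²_{2m}` and of `F` in `H²`. -/
def boxConst (m : ℕ) : ℝ≥0∞ :=
  gammaIntegral (2 * m - 3 / 2) lorentzUnit * ENNReal.ofReal ((4 * Real.pi ^ 2) ^ (2 * m))

lemma boxConst_pos (m : ℕ) : 0 < boxConst m :=
  ENNReal.mul_pos (gammaIntegral_pos _ _).ne' (ENNReal.ofReal_pos.2 (by positivity)).ne'

lemma boxConst_lt_top (hm : 1 ≤ m) : boxConst m < ∞ := by
  have hm' : (1 : ℝ) ≤ m := by exact_mod_cast hm
  exact ENNReal.mul_lt_top (gammaIntegral_lorentzUnit_lt_top (by linarith)) ENNReal.ofReal_lt_top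

lemma hardyNormSq_congr (h : EqOn F G TLambda3) : hardyNormSq F = hardyNormSq G := by
  refine iSup_congr fun y => iSup_congr fun hy => lintegral_congr fun x => ?_
  exact congrArg (‖·‖ₑ ^ 2) (h (tubePoint_mem_tube.2 hy : tubePoint x y ∈ tube Lambda3))

lemma bergNormSqTube_congr {ν : ℝ} (h : EqOn F G TLambda3) :
    bergNormSqTube ν F = bergNormSqTube ν G := by
  refine setLIntegral_congr_fun isOpen_lorentzCone.measurableSet fun y hy => ?_
  congr 1
  refine lintegral_congr fun x => ?_
  exact congrArg (‖·‖ₑ ^ 2) (h (tubePoint_mem_tube.2 hy : tubePoint x y ∈ tube Lambda3))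

lemma enorm_boxSymbol_pow_mul_sq (m : ℕ) (c : ℂ) {ξ : Fin 3 → ℝ} (hξ : ξ ∈ Lambda3) :
    ‖(boxSymbol ξ : ℂ) ^ m * c‖ₑ ^ 2 * ENNReal.ofReal (DeltaL ξ ^ (-(2 * m) : ℝ)) =
      ENNReal.ofReal ((4 * Real.pi ^ 2) ^ (2 * m)) * ‖c‖ₑ ^ 2 := by
  have hΔ := DeltaL_pos hξ
  have hs := boxSymbol_pos hξ
  have hpow : DeltaL ξ ^ (-(2 * m) : ℝ) = (DeltaL ξ ^ (2 * m))⁻¹ := by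
    rw [Real.rpow_neg hΔ.le, ← Real.rpow_natCast]
    norm_cast
  have hnorm : ‖(boxSymbol ξ : ℂ) ^ m‖ₑ = ENNReal.ofReal (boxSymbol ξ ^ m) := by
    rw [← ofReal_norm, norm_pow, Complex.norm_real, Real.norm_of_nonneg hs.le]
  rw [enorm_mul, mul_pow, mul_right_comm, hnorm, ← ENNReal.ofReal_pow (by positivity),
    ← ENNReal.ofReal_mul (by positivity), hpow, ← pow_mul, mul_comm m, boxSymbol, mul_pow,
    mul_inv_cancel_right₀ (by positivity)]

lemma bergNormSqTube_laplace_boxSymbol_pow_mul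
    (hf : LaplaceDensity Lambda3 fun ξ => (boxSymbol ξ : ℂ) ^ m * f ξ) :
    bergNormSqTube (2 * m) (laplace fun ξ => (boxSymbol ξ : ℂ) ^ m * f ξ) =
      boxConst m * ∫⁻ ξ in Lambda3, ‖f ξ‖ₑ ^ 2 := by
  rw [hf.bergNormSqTube_laplace, boxConst, mul_assoc,
    ← lintegral_const_mul' _ _ ENNReal.ofReal_ne_top]
  congr 1
  exact setLIntegral_congr_fun isOpen_lorentzCone.measurableSet fun ξ hξ =>
    enorm_boxSymbol_pow_mul_sq m (f ξ) hξ

lemma LaplaceDensity.setLIntegral_Lambda3 (hf : LaplaceDensity Lambda3 f) :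
    ∫⁻ ξ in Lambda3, ‖f ξ‖ₑ ^ 2 = ∫⁻ ξ, ‖f ξ‖ₑ ^ 2 := by
  rw [← Measure.restrict_congr_set dualCone_ae_eq_Lambda3]
  exact setLIntegral_eq_of_support_subset
    (Function.support_subset_iff'.2 fun ξ hξ => by simp [hf.eq_zero ξ hξ])

/-- `□ᵐ` multiplies the Laplace density by `(4π²Δ)ᵐ`, which exactly compensates the weight
`Δ^(-2m)` of the Bergman norm on the density side. -/
lemma LaplaceDensity.bergNormSqTube_box_iterate_laplace (hf : LaplaceDensity Lambda3 f) (m : ℕ) :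
    bergNormSqTube (2 * m) (Box^[m] (laplace f)) = boxConst m * hardyNormSq (laplace f) := by
  have hbox := LaplaceDensity.boxSymbol_pow_mul (Ω := lorentzCone) isOpen_lorentzCone hf m
  have heq := LaplaceDensity.eqOn_box_iterate_laplace (Ω := lorentzCone) isOpen_lorentzCone hf m
  have hhardy := LaplaceDensity.hardyNormSqOn_laplace (Ω := lorentzCone) isOpen_lorentzCone
    ⟨_, lorentzUnit_mem⟩ hf
  rw [bergNormSqTube_congr heq, bergNormSqTube_laplace_boxSymbol_pow_mul hbox,
    hf.setLIntegral_Lambda3]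
  exact congrArg _ hhardy.symm

lemma RapidlyDecaying.bergNormSqTube_box_iterate (hF : DifferentiableOn ℂ F TLambda3)
    (hdec : RapidlyDecaying Lambda3 F) (m : ℕ) :
    bergNormSqTube (2 * m) (Box^[m] F) = boxConst m * hardyNormSq F := by
  obtain ⟨f, hf, hFf⟩ := RapidlyDecaying.exists_laplace_eqOn (Ω := lorentzCone) isOpen_lorentzCone
    ⟨_, lorentzUnit_mem⟩ hF hdec
  rw [bergNormSqTube_congr (eqOn_box_iterate (isOpen_tube isOpen_lorentzCone) hFf m),
    hardyNormSq_congr hFf]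
  exact LaplaceDensity.bergNormSqTube_box_iterate_laplace hf m

lemma LaplaceDensity.exists_boxSymbol_pow_mul_ae_eq {g : (Fin 3 → ℝ) → ℂ}
    (hg : LaplaceDensity Lambda3 g) (m : ℕ) :
    ∃ f, AEStronglyMeasurable f volume ∧ (∀ ξ ∉ Lambda3, f ξ = 0) ∧
      (fun ξ => (boxSymbol ξ : ℂ) ^ m * f ξ) =ᵐ[volume] g := by
  have hgm := LaplaceDensity.aestronglyMeasurable (Ω := lorentzCone) hg ⟨_, lorentzUnit_mem⟩
  have hcont : Continuous fun ξ => (boxSymbol ξ : ℂ) ^ m :=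
    (Complex.continuous_ofReal.comp continuous_boxSymbol).pow m
  refine ⟨Lambda3.indicator fun ξ => ((boxSymbol ξ : ℂ) ^ m)⁻¹ * g ξ,
    (hcont.measurable.inv.aestronglyMeasurable.mul hgm).indicator isOpen_lorentzCone.measurableSet,
    fun ξ hξ => indicator_of_notMem hξ _, ?_⟩
  filter_upwards [dualCone_ae_eq_Lambda3] with ξ hξ
  by_cases hmem : ξ ∈ Lambda3
  · rw [indicator_of_mem hmem, mul_inv_cancel_left₀]
    exact pow_ne_zero _ (Complex.ofReal_ne_zero.2 (boxSymbol_pos hmem).ne')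
  · rw [indicator_of_notMem hmem, mul_zero, hg.eq_zero ξ fun h => hmem (hξ.mp h)]

lemma RapidlyDecaying.exists_box_iterate_laplace_eqOn (hG : DifferentiableOn ℂ G TLambda3)
    (hdec : RapidlyDecaying Lambda3 G) (hfin : bergNormSqTube (2 * m) G < ∞) :
    ∃ f, LaplaceDensity Lambda3 f ∧ EqOn (Box^[m] (laplace f)) G TLambda3 := by
  obtain ⟨g, hg, hGg⟩ := RapidlyDecaying.exists_laplace_eqOn (Ω := lorentzCone) isOpen_lorentzCone
    ⟨_, lorentzUnit_mem⟩ hG hdec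
  obtain ⟨f, hfm, hf0, hfg⟩ := LaplaceDensity.exists_boxSymbol_pow_mul_ae_eq hg m
  have hf0' : ∀ ξ ∉ dualCone Lambda3, f ξ = 0 := fun ξ hξ =>
    hf0 ξ fun h => hξ (Lambda3_subset_dualCone h)
  have hbox : LaplaceDensity Lambda3 fun ξ => (boxSymbol ξ : ℂ) ^ m * f ξ :=
    ⟨fun ξ hξ => by rw [hf0' ξ hξ, mul_zero], fun y hy => (hg.memLp y hy).ae_eq <| by
      filter_upwards [hfg] with ξ hξ using by rw [← hξ]⟩
  have hlap : laplace (fun ξ => (boxSymbol ξ : ℂ) ^ m * f ξ) = laplace g := by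
    ext z
    refine integral_congr_ae ?_
    filter_upwards [hfg] with ξ hξ using by rw [← hξ]
  have hL2 : ∫⁻ ξ, ‖f ξ‖ₑ ^ 2 < ∞ := by
    rw [bergNormSqTube_congr hGg, ← hlap, bergNormSqTube_laplace_boxSymbol_pow_mul hbox,
      setLIntegral_eq_of_support_subset
        (Function.support_subset_iff'.2 fun ξ hξ => by simp [hf0 ξ hξ])] at hfin
    exact ENNReal.lt_top_of_mul_ne_top_right hfin.ne (boxConst_pos m).ne'
  have hmem : MemLp f 2 volume :=
    ⟨hfm, (eLpNorm_lt_top_iff_lintegral_rpow_enorm_lt_top two_ne_zero ENNReal.ofNat_ne_top).2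
      (by simpa using hL2)⟩
  have hf := LaplaceDensity.of_memLp hf0' hmem
  have heq := LaplaceDensity.eqOn_box_iterate_laplace (Ω := lorentzCone) isOpen_lorentzCone hf m
  rw [hlap] at heq
  exact ⟨f, hf, heq.trans hGg.symm⟩

end BoxIsometry

section Carleson

lemma setLIntegral_enorm_sq_le_of_tendsto {X E : Type*} [TopologicalSpace X] [MeasurableSpace X]
    [OpensMeasurableSpace X] [NormedAddCommGroup E] {μ : Measure X} {U : Set X} {f : ℕ → X → E}
    {g : X → E} {K : ℝ≥0∞} (hU : IsOpen U) (hf : ∀ n, ContinuousOn (f n) U)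
    (h : ∀ z ∈ U, Tendsto (fun n => f n z) atTop (𝓝 (g z)))
    (hK : ∀ n, ∫⁻ z in U, ‖f n z‖ₑ ^ 2 ∂μ ≤ K) : ∫⁻ z in U, ‖g z‖ₑ ^ 2 ∂μ ≤ K :=
  calc ∫⁻ z in U, ‖g z‖ₑ ^ 2 ∂μ
      = ∫⁻ z in U, liminf (fun n => ‖f n z‖ₑ ^ 2) atTop ∂μ :=
        setLIntegral_congr_fun hU.measurableSet fun z hz =>
          ((ENNReal.continuous_pow 2).continuousAt.tendsto.comp (h z hz).enorm).liminf_eq.symm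
    _ ≤ liminf (fun n => ∫⁻ z in U, ‖f n z‖ₑ ^ 2 ∂μ) atTop :=
        lintegral_liminf_le' fun n => ((hf n).enorm.aemeasurable hU.measurableSet).pow_const 2
    _ ≤ K := (liminf_le_liminf (Eventually.of_forall hK)).trans_eq (liminf_const K)

variable {m : ℕ} {μ : Measure (Fin 3 → ℂ)} {F G : (Fin 3 → ℂ) → ℂ} {A C : ℝ≥0∞}

lemma setLIntegral_box_iterate_le_of_bergman_carleson (hm : 1 ≤ m)
    (H : ∀ G, DifferentiableOn ℂ G TLambda3 → bergNormSqTube (2 * m) G < ∞ →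
      ∫⁻ z in TLambda3, ‖G z‖ₑ ^ 2 ∂μ ≤ C * bergNormSqTube (2 * m) G)
    (hF : DifferentiableOn ℂ F TLambda3) (hfin : hardyNormSq F < ∞) :
    ∫⁻ z in TLambda3, ‖Box^[m] F z‖ₑ ^ 2 ∂μ ≤ C * boxConst m * hardyNormSq F := by
  have hT : IsOpen TLambda3 := isOpen_tube isOpen_lorentzCone
  obtain ⟨Fn, hlim, hFn⟩ := exists_rapidlyDecaying_tendstoLocallyUniformlyOn hF
    (sliceBounded_of_hardyNormSqOn_lt_top (Ω := lorentzCone) isOpen_lorentzCone hfin)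
  have hbox n := differentiableOn_box_iterate hT (hFn n).1 m
  have hboxlim := tendstoLocallyUniformlyOn_box_iterate hT (fun n => (hFn n).1) hlim m
  refine setLIntegral_enorm_sq_le_of_tendsto hT (fun n => (hbox n).continuousOn)
    (fun z hz => hboxlim.tendsto_at hz) fun n => ?_
  obtain ⟨hFd, hdec, hle, -⟩ := hFn n
  have hberg := hdec.bergNormSqTube_box_iterate hFd m
  have hlt : bergNormSqTube (2 * m) (Box^[m] (Fn n)) < ∞ := by
    rw [hberg]
    exact ENNReal.mul_lt_top (boxConst_lt_top hm) (hle.trans_lt hfin)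
  calc ∫⁻ z in TLambda3, ‖Box^[m] (Fn n) z‖ₑ ^ 2 ∂μ
      ≤ C * bergNormSqTube (2 * m) (Box^[m] (Fn n)) := H _ (hbox n) hlt
    _ = C * boxConst m * hardyNormSq (Fn n) := by rw [hberg, mul_assoc]
    _ ≤ C * boxConst m * hardyNormSq F := by gcongr

lemma setLIntegral_le_of_box_carleson (hm : 1 ≤ m)
    (H : ∀ F, DifferentiableOn ℂ F TLambda3 → hardyNormSq F < ∞ →
      ∫⁻ z in TLambda3, ‖Box^[m] F z‖ₑ ^ 2 ∂μ ≤ A * hardyNormSq F)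
    (hG : DifferentiableOn ℂ G TLambda3) (hfin : bergNormSqTube (2 * m) G < ∞) :
    ∫⁻ z in TLambda3, ‖G z‖ₑ ^ 2 ∂μ ≤ A / boxConst m * bergNormSqTube (2 * m) G := by
  have hT : IsOpen TLambda3 := isOpen_tube isOpen_lorentzCone
  have hν : (3 / 2 : ℝ) ≤ 2 * m := by
    have : (1 : ℝ) ≤ m := by exact_mod_cast hm
    linarith
  obtain ⟨Gn, hlim, hGn⟩ := exists_rapidlyDecaying_tendstoLocallyUniformlyOn hG
    (sliceBounded_of_bergNormSqTube_lt_top hν hfin)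
  refine setLIntegral_enorm_sq_le_of_tendsto hT (fun n => (hGn n).1.continuousOn)
    (fun z hz => hlim.tendsto_at hz) fun n => ?_
  obtain ⟨hGd, hdec, -, hle⟩ := hGn n
  obtain ⟨f, hf, hfG⟩ := hdec.exists_box_iterate_laplace_eqOn hGd ((hle _ hν).trans_lt hfin)
  have hhardy : hardyNormSq (laplace f) ≤ bergNormSqTube (2 * m) G / boxConst m := by
    rw [ENNReal.le_div_iff_mul_le (.inl (boxConst_pos m).ne') (.inl (boxConst_lt_top hm).ne),
      mul_comm, ← hf.bergNormSqTube_box_iterate_laplace m, bergNormSqTube_congr hfG]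
    exact hle _ hν
  calc ∫⁻ z in TLambda3, ‖Gn n z‖ₑ ^ 2 ∂μ
      = ∫⁻ z in TLambda3, ‖Box^[m] (laplace f) z‖ₑ ^ 2 ∂μ :=
        setLIntegral_congr_fun hT.measurableSet fun z hz => congrArg (‖·‖ₑ ^ 2) (hfG hz).symm
    _ ≤ A * hardyNormSq (laplace f) :=
        H _ (LaplaceDensity.differentiableOn_laplace (Ω := lorentzCone) isOpen_lorentzCone hf)
          (hhardy.trans_lt (ENNReal.div_lt_top hfin.ne (boxConst_pos m).ne'))
    _ ≤ A * (bergNormSqTube (2 * m) G / boxConst m) := by gcongr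
    _ = A / boxConst m * bergNormSqTube (2 * m) G := by
        rw [← ENNReal.mul_div_right_comm, mul_div_assoc]

end Carleson

end BoxCarleson

/-- for `m ≥ 1` and a positive Borel measure `μ` on `T_{Λ₃}`,
`μ` is an `m`-box Carleson measure for `H²(T_{Λ₃})` iff `μ` is a Carleson measure
for the weighted Bergman space `A²_{2m}(T_{Λ₃})`. -/
theorem box_carleson_iff_bergman_carleson (m : ℕ) (hm : 1 ≤ m)
    (μ : Measure (Fin 3 → ℂ)) :
    (∃ A : ℝ, 0 < A ∧ ∀ F : (Fin 3 → ℂ) → ℂ,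
        DifferentiableOn ℂ F TLambda3 → hardyNormSq F < ⊤ →
        (∫⁻ z in TLambda3, (‖Box^[m] F z‖₊ : ℝ≥0∞) ^ 2 ∂μ)
          ≤ ENNReal.ofReal A * hardyNormSq F)
    ↔ (∃ C : ℝ, 0 < C ∧ ∀ G : (Fin 3 → ℂ) → ℂ,
        DifferentiableOn ℂ G TLambda3 → bergNormSqTube (2 * m) G < ⊤ →
        (∫⁻ z in TLambda3, (‖G z‖₊ : ℝ≥0∞) ^ 2 ∂μ)
          ≤ ENNReal.ofReal C * bergNormSqTube (2 * m) G) := by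
  set k := (BoxCarleson.boxConst m).toReal
  have hk_eq : ENNReal.ofReal k = BoxCarleson.boxConst m :=
    ENNReal.ofReal_toReal (BoxCarleson.boxConst_lt_top hm).ne
  have hk_pos : 0 < k := ENNReal.toReal_pos (BoxCarleson.boxConst_pos m).ne'
    (BoxCarleson.boxConst_lt_top hm).ne
  constructor
  · rintro ⟨A, hA, H⟩
    refine ⟨A / k, div_pos hA hk_pos, fun G hG hfin => ?_⟩
    rw [ENNReal.ofReal_div_of_pos hk_pos, hk_eq]
    exact BoxCarleson.setLIntegral_le_of_box_carleson hm H hG hfin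
  · rintro ⟨C, hC, H⟩
    refine ⟨C * k, mul_pos hC hk_pos, fun F hF hfin => ?_⟩
    rw [ENNReal.ofReal_mul hC.le, hk_eq]
    exact BoxCarleson.setLIntegral_box_iterate_le_of_bergman_carleson hm H hF hfin
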